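/- For 1 ≤ i, i' ≤ n²/2 and j, j' ∈ {0,1}, the left u-modules S_{2i,j} and S_{2i',j'} are isomorphic if and only if i = i' and j = j'. -/

import Mathlib

noncomputable section

open scoped TensorProduct

namespace QFL

/-- The defining relations of the quasi-Frobenius-Lusztig kernel `ũ_q(sl₂)`,
on the free algebra on four generators `K = ι 0`, `K̂ = ι 1`, `E = ι 2`, `F = ι 3`. -/
inductive Rel (k : Type) [Field k] (n : ℕ) (q : k) :
    FreeAlgebra k (Fin 4) → FreeAlgebra k (Fin 4) → Prop
  | Kord : Rel k n q (FreeAlgebra.ι k (0 : Fin 4) ^ n) 1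
  | Khord : Rel k n q (FreeAlgebra.ι k (1 : Fin 4) ^ n)
      ((FreeAlgebra.ι k (0 : Fin 4) ^ (n - 1)) ^ 2)
  | KKh : Rel k n q (FreeAlgebra.ι k (0 : Fin 4) * FreeAlgebra.ι k (1 : Fin 4))
      (FreeAlgebra.ι k (1 : Fin 4) * FreeAlgebra.ι k (0 : Fin 4))
  | KE : Rel k n q
      (FreeAlgebra.ι k (0 : Fin 4) * FreeAlgebra.ι k (2 : Fin 4) *
        FreeAlgebra.ι k (0 : Fin 4) ^ (n - 1))
      (q ^ n • FreeAlgebra.ι k (2 : Fin 4))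
  | KF : Rel k n q
      (FreeAlgebra.ι k (0 : Fin 4) * FreeAlgebra.ι k (3 : Fin 4) *
        FreeAlgebra.ι k (0 : Fin 4) ^ (n - 1))
      ((q ^ n)⁻¹ • FreeAlgebra.ι k (3 : Fin 4))
  | KhE : Rel k n q
      (FreeAlgebra.ι k (1 : Fin 4) * FreeAlgebra.ι k (2 : Fin 4) *
        FreeAlgebra.ι k (1 : Fin 4) ^ (n ^ 2 - 1))
      ((q ^ n * (q ^ 2)⁻¹) • FreeAlgebra.ι k (2 : Fin 4))
  | KhF : Rel k n q
      (FreeAlgebra.ι k (1 : Fin 4) * FreeAlgebra.ι k (3 : Fin 4) *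
        FreeAlgebra.ι k (1 : Fin 4) ^ (n ^ 2 - 1))
      (((q ^ n)⁻¹ * q ^ 2) • FreeAlgebra.ι k (3 : Fin 4))
  | Enil : Rel k n q (FreeAlgebra.ι k (2 : Fin 4) ^ n ^ 2) 0
  | Fnil : Rel k n q (FreeAlgebra.ι k (3 : Fin 4) ^ n ^ 2) 0
  | EF : Rel k n q
      (FreeAlgebra.ι k (3 : Fin 4) * FreeAlgebra.ι k (2 : Fin 4) -
        q⁻¹ • (FreeAlgebra.ι k (2 : Fin 4) * FreeAlgebra.ι k (3 : Fin 4)))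
      (1 - FreeAlgebra.ι k (0 : Fin 4) ^ (n - 1) * FreeAlgebra.ι k (1 : Fin 4))

/-- The algebra `ũ_q(sl₂)` as the quotient of the free algebra by the defining relations. -/
abbrev U (k : Type) [Field k] (n : ℕ) (q : k) := RingQuot (Rel k n q)

variable (k : Type) [Field k] (n : ℕ) (q : k)

def K : U k n q := RingQuot.mkAlgHom k (Rel k n q) (FreeAlgebra.ι k (0 : Fin 4))
def Kh : U k n q := RingQuot.mkAlgHom k (Rel k n q) (FreeAlgebra.ι k (1 : Fin 4))
def E : U k n q := RingQuot.mkAlgHom k (Rel k n q) (FreeAlgebra.ι k (2 : Fin 4))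
def F : U k n q := RingQuot.mkAlgHom k (Rel k n q) (FreeAlgebra.ι k (3 : Fin 4))

/-- `K⁻¹ = K^(n-1)`. -/
def Kinv : U k n q := K k n q ^ (n - 1)
/-- `K̂⁻¹ = K̂^(n²-1)`. -/
def Khinv : U k n q := Kh k n q ^ (n ^ 2 - 1)

/-- `φ_{2i} = (2/n²) Σ_{t<n²/2} q^{-2it} (K⁻¹K̂)^t`. -/
def phi (i : ℕ) : U k n q :=
  ((n ^ 2 : k)⁻¹ * 2) • ∑ t ∈ Finset.range (n ^ 2 / 2),
    (q⁻¹ ^ (2 * i * t)) • (Kinv k n q * Kh k n q) ^ t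

/-- `𝟙₀ = (1/2)(1 + KK̂^(n/2))` and `𝟙₁ = (1/2)(1 - KK̂^(n/2))`. -/
def oneJ (j : ℕ) : U k n q :=
  if j = 0 then (2 : k)⁻¹ • (1 + K k n q * Kh k n q ^ (n / 2))
  else (2 : k)⁻¹ • (1 - K k n q * Kh k n q ^ (n / 2))

/-- The idempotent `e_{2i,j} = φ_{2i} 𝟙_j`. -/
def eIdem (i j : ℕ) : U k n q := phi k n q i * oneJ k n q j

/-- `α_{2i,j} = F^(n²-1) e_{2i,j}`. -/
def alpha (i j : ℕ) : U k n q := F k n q ^ (n ^ 2 - 1) * eIdem k n q i j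

/-- `β_{2i,j} = E^(2i-2) α_{2i,j}`. -/
def beta (i j : ℕ) : U k n q := E k n q ^ (2 * i - 2) * alpha k n q i j

/-- The Gaussian number `s_q = 1 + q + ⋯ + q^(s-1)`. -/
def gauss (x : k) (s : ℕ) : k := ∑ t ∈ Finset.range s, x ^ t

/-- The span of the PBW-type monomials `F^a K^c K̂^d E^b` with `a ≤ n²-2`, `b ≤ n²-1`,
`c ≤ n-1`, `d ≤ n²-1`. -/
def pbw : Submodule k (U k n q) :=
  Submodule.span k {x | ∃ a b c d : ℕ, a ≤ n ^ 2 - 2 ∧ b ≤ n ^ 2 - 1 ∧ c ≤ n - 1 ∧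
    d ≤ n ^ 2 - 1 ∧ x = F k n q ^ a * K k n q ^ c * Kh k n q ^ d * E k n q ^ b}

/-- `γ_{2i,j}`: the unique element of the PBW span with `F·γ = β_{2i,j}`. -/
def gam (i j : ℕ) : U k n q :=
  @dite _ (∃! x, x ∈ pbw k n q ∧ F k n q * x = beta k n q i j)
    (Classical.propDecidable _) (fun h => h.choose) (fun _ => 0)

/-- The left ideal `P_{2i,j} = u·γ_{2i,j}`. -/
def P (i j : ℕ) : Submodule (U k n q) (U k n q) :=
  Submodule.span (U k n q) {gam k n q i j}

/-- `S_{2i,j} = Soc(P_{2i,j})`, the sum of all simple submodules of `P_{2i,j}`. -/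
def S (i j : ℕ) : Submodule (U k n q) (U k n q) :=
  sSup {N : Submodule (U k n q) (U k n q) | N ≤ P k n q i j ∧ IsSimpleModule (U k n q) N}

end QFL

namespace QFL

section abs
variable {k : Type} [Field k] {R : Type} [Ring R] [Algebra k R]

theorem gauss_succ (x : k) (s : ℕ) : gauss k x (s + 1) = gauss k x s + x ^ s := by
  simp [gauss, Finset.sum_range_succ]

theorem gauss_succ' (x : k) (s : ℕ) : gauss k x (s + 1) = 1 + x * gauss k x s := by
  simp [gauss, Finset.sum_range_succ', Finset.mul_sum, pow_succ']
  ring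

theorem gauss_zero (x : k) : gauss k x 0 = 0 := by simp [gauss]

theorem gauss_mul (x : k) (s : ℕ) : gauss k x s * (x - 1) = x ^ s - 1 := by
  simpa [gauss] using geom_sum_mul x s

theorem gauss_N {x : k} {N : ℕ} (hx : IsPrimitiveRoot x N) (hN : 1 < N) : gauss k x N = 0 := by
  have h := gauss_mul x N
  rw [hx.pow_eq_one, sub_self] at h
  rcases mul_eq_zero.1 h with h | h
  · exact h
  · exact absurd (sub_eq_zero.1 h) (hx.ne_one hN)

theorem gauss_ne {x : k} {N s : ℕ} (hx : IsPrimitiveRoot x N) (h1 : 1 ≤ s) (h2 : s < N) :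
    gauss k x s ≠ 0 := by
  intro h0
  have h := gauss_mul x s
  rw [h0, zero_mul] at h
  exact hx.pow_ne_one_of_pos_of_lt (by omega) h2 (sub_eq_zero.1 h.symm)

theorem FE_pow {q : k} (hq0 : q ≠ 0) {E F L : R}
    (hLE : L * E = (q⁻¹ ^ 2) • (E * L)) (hEF : F * E = q⁻¹ • (E * F) + (1 - L)) (s : ℕ) :
    F * E ^ s = q⁻¹ ^ s • (E ^ s * F) +
      gauss k q⁻¹ s • (E ^ (s - 1) * (1 - (q⁻¹ ^ s * q) • L)) := by
  induction s with
  | zero => simp [gauss_zero]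
  | succ s ih =>
    have h1 : ∀ c : k, gauss k q⁻¹ s • (E ^ (s - 1) * (1 - c • L) * E)
        = gauss k q⁻¹ s • (E ^ s - (c * q⁻¹ ^ 2) • (E ^ s * L)) := by
      intro c
      rcases s with _ | s
      · simp [gauss_zero]
      · congr 1
        simp only [Nat.add_sub_cancel, mul_sub, sub_mul, mul_one, mul_smul_comm, smul_mul_assoc,
          mul_assoc, hLE, pow_succ E, smul_smul]
    rw [pow_succ E, ← mul_assoc, ih, add_mul, smul_mul_assoc, smul_mul_assoc, h1, mul_assoc (E ^ s),
      hEF, gauss_succ']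
    have h2 : q⁻¹ ^ s = 1 + (q⁻¹ - 1) * gauss k q⁻¹ s := by
      have := gauss_mul q⁻¹ s
      linear_combination -this
    simp only [Nat.add_sub_cancel, mul_add, mul_sub, mul_one, mul_smul_comm, mul_assoc (E ^ s)]
    rw [pow_succ q⁻¹ s, h2]
    have hh : q⁻¹ * q = 1 := inv_mul_cancel₀ hq0
    have hh2 : q * q⁻¹ = 1 := mul_inv_cancel₀ hq0
    generalize gauss k q⁻¹ s = g
    have h3 : (1 + (q⁻¹ - 1) * g) * q * q⁻¹ ^ 2 = (1 + (q⁻¹ - 1) * g) * q⁻¹ := by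
      rw [pow_two]; linear_combination (1 + (q⁻¹ - 1) * g) * q⁻¹ * hh2
    have h4 : (1 + (q⁻¹ - 1) * g) * q⁻¹ * q = (1 + (q⁻¹ - 1) * g) := by
      linear_combination (1 + (q⁻¹ - 1) * g) * hh
    rw [h3, h4]
    module

/-- The two-generator configuration studied below. -/
structure Dat (N : ℕ) (q : k) (E F L z : R) : Prop where
  hq : IsPrimitiveRoot q N
  h4 : 4 ∣ N
  hN : 0 < N
  hLE : L * E = (q⁻¹ ^ 2) • (E * L)
  hEF : F * E = q⁻¹ • (E * F) + (1 - L)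
  hzE : z * E = -(E * z)
  hEN : E ^ N = 0
  hFN : F ^ N = 0
  gen : ∀ T : Submodule k R, (∀ x ∈ T, L * x ∈ T) → (∀ x ∈ T, z * x ∈ T) →
    (∀ x ∈ T, E * x ∈ T) → (∀ x ∈ T, F * x ∈ T) → ∀ u x, x ∈ T → u * x ∈ T

structure Vec (N : ℕ) (q : k) (E F L z : R) (i : ℕ) (ε : k) (α γ : R) : Prop where
  hi : 1 ≤ i
  hiN : 2 * i ≤ N
  Fα : F * α = 0
  Lα : L * α = q ^ (2 * i - 2) • α
  zα : z * α = (-ε) • α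
  Fγ : F * γ = E ^ (2 * i - 2) * α
  Lγ : L * γ = q⁻¹ ^ (2 * i) • γ
  zγ : z * γ = ε • γ
  top : E ^ (N - 1) * α ≠ 0

theorem L_pow {q : k} {E L : R} (hLE : L * E = (q⁻¹ ^ 2) • (E * L)) (s : ℕ) :
    L * E ^ s = (q⁻¹ ^ (2 * s)) • (E ^ s * L) := by
  induction s with
  | zero => simp
  | succ s ih =>
    rw [pow_succ, ← mul_assoc, ih, smul_mul_assoc, mul_assoc, hLE, mul_smul_comm, smul_smul,
      mul_assoc]
    congr 1
    ring

theorem z_pow {E z : R} (hzE : z * E = -(E * z)) (s : ℕ) :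
    z * E ^ s = ((-1 : k) ^ s) • (E ^ s * z) := by
  induction s with
  | zero => simp
  | succ s ih =>
    rw [pow_succ, ← mul_assoc, ih, smul_mul_assoc, mul_assoc, hzE, pow_succ]
    simp [mul_assoc]

section
variable {N : ℕ} {q : k} {E F L z : R} (D : Dat N q E F L z)
include D

theorem Dat.q0 : q ≠ 0 := D.hq.ne_zero (by have := D.hN; omega)

theorem Dat.N4 : 4 ≤ N := Nat.le_of_dvd D.hN D.h4

theorem Dat.Epow {s : ℕ} (h : N ≤ s) : E ^ s = 0 := by
  rw [← Nat.sub_add_cancel h, pow_add, D.hEN, mul_zero]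

theorem Dat.hqi : IsPrimitiveRoot q⁻¹ N := D.hq.inv

variable {i : ℕ} {ε : k} {α γ : R} (V : Vec N q E F L z i ε α γ)
include V

theorem FEα (s : ℕ) : F * (E ^ s * α) =
    (gauss k q⁻¹ s * (1 - q⁻¹ ^ s * q ^ (2 * i - 1))) • (E ^ (s - 1) * α) := by
  rw [← mul_assoc, FE_pow D.q0 D.hLE D.hEF, add_mul, smul_mul_assoc, mul_assoc, V.Fα, mul_zero,
    smul_zero, zero_add, smul_mul_assoc, mul_assoc, sub_mul, one_mul, smul_mul_assoc, V.Lα,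
    smul_smul, mul_sub, mul_smul_comm]
  have : q ^ (2 * i - 1) = q * q ^ (2 * i - 2) := by
    rw [← pow_succ']; congr 1; have := V.hi; omega
  rw [this]
  module

theorem FEγ (s : ℕ) : F * (E ^ s * γ) = q⁻¹ ^ s • (E ^ (s + (2 * i - 2)) * α) +
    (gauss k q⁻¹ s * (1 - q⁻¹ ^ (s + 2 * i - 1))) • (E ^ (s - 1) * γ) := by
  rw [← mul_assoc, FE_pow D.q0 D.hLE D.hEF, add_mul, smul_mul_assoc, mul_assoc, V.Fγ,
    smul_mul_assoc, mul_assoc, sub_mul, one_mul, smul_mul_assoc, V.Lγ,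
    smul_smul, mul_sub, mul_smul_comm, pow_add E, mul_assoc (E ^ s) (E ^ (2 * i - 2))]
  have : q⁻¹ ^ (s + 2 * i - 1) = q⁻¹ ^ s * q * q⁻¹ ^ (2 * i) := by
    have h : s + 2 * i = (s + 2 * i - 1) + 1 := by have := V.hi; omega
    have h2 : q⁻¹ ^ s * q * q⁻¹ ^ (2 * i) = q⁻¹ ^ (s + 2 * i) * q := by rw [pow_add]; ring
    rw [h2, h, pow_succ, mul_assoc, inv_mul_cancel₀ D.q0, mul_one, Nat.add_sub_cancel]
  rw [this]
  module

theorem cα_ne {s : ℕ} (h1 : 1 ≤ s) (h2 : s < N) (h3 : s ≠ 2 * i - 1) :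
    gauss k q⁻¹ s * (1 - q⁻¹ ^ s * q ^ (2 * i - 1)) ≠ 0 := by
  refine mul_ne_zero (gauss_ne D.hqi h1 h2) fun h => ?_
  rw [sub_eq_zero, inv_pow, eq_comm, inv_mul_eq_one₀ (pow_ne_zero _ D.q0)] at h
  exact h3 (D.hq.pow_inj h2 (by have := V.hi; have := V.hiN; omega) h)

theorem cγ_ne {s : ℕ} (h1 : 1 ≤ s) (h2 : s < N) (h3 : s ≠ N + 1 - 2 * i) :
    gauss k q⁻¹ s * (1 - q⁻¹ ^ (s + 2 * i - 1)) ≠ 0 := by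
  refine mul_ne_zero (gauss_ne D.hqi h1 h2) fun h => ?_
  rw [sub_eq_zero, eq_comm, D.hqi.pow_eq_one_iff_dvd] at h
  have := V.hi; have := V.hiN
  obtain ⟨c, hc⟩ := h
  have h5 : c = 1 := by
    have : c < 2 := by
      by_contra hh
      have : N * 2 ≤ N * c := Nat.mul_le_mul_left _ (by omega)
      omega
    have : c ≠ 0 := by rintro rfl; omega
    omega
  subst h5
  omega

theorem cα_zero : (1 - q⁻¹ ^ (2 * i - 1) * q ^ (2 * i - 1)) = 0 := by
  rw [← mul_pow, inv_mul_cancel₀ D.q0]; simp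

theorem topγ : E ^ (N - 1) * γ ≠ 0 := by
  intro h
  have := V.hi; have := V.hiN; have := D.N4
  have key : ∀ r, r ≤ 2 * i - 2 → E ^ (N - 1 - r) * γ = 0 := by
    intro r
    induction r with
    | zero => intro _; simpa using h
    | succ r ih =>
      intro hr
      have h1 := FEγ D V (N - 1 - r)
      rw [ih (by omega), mul_zero, D.Epow (by omega), zero_mul, smul_zero, zero_add, eq_comm] at h1
      rcases smul_eq_zero.1 h1 with h2 | h2
      · exact absurd h2 (cγ_ne D V (by omega) (by omega) (by omega))
      · rw [← h2]; congr 2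
  have h0 := key (2 * i - 2) le_rfl
  have h1 := FEγ D V (N - 1 - (2 * i - 2))
  rw [h0, mul_zero] at h1
  have e1 : N - 1 - (2 * i - 2) + (2 * i - 2) = N - 1 := by omega
  have e2 : N - 1 - (2 * i - 2) + 2 * i - 1 = N := by omega
  rw [e1, e2, D.hqi.pow_eq_one, sub_self, mul_zero, zero_smul, add_zero, eq_comm] at h1
  rcases smul_eq_zero.1 h1 with h2 | h2
  · exact pow_ne_zero _ (inv_ne_zero D.q0) h2
  · exact V.top h2

theorem wt_ne : q ^ (2 * i - 2) ≠ q⁻¹ ^ (2 * i) := by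
  intro h
  have := V.hi; have := V.hiN; have := D.N4
  have h1 : q ^ (2 * i - 2 + 2 * i) = 1 := by
    rw [pow_add, h, ← mul_pow, inv_mul_cancel₀ D.q0, one_pow]
  rw [D.hq.pow_eq_one_iff_dvd] at h1
  have := D.h4.trans h1
  omega

/-- Linear independence of `E^s α`, `E^t γ`. -/
theorem indepα (a : ℕ → k) (h : ∑ s ∈ Finset.range N, a s • (E ^ s * α) = 0) :
    ∀ s < N, a s = 0 := by
  intro s
  induction s using Nat.strong_induction_on with
  | _ s ih =>
    intro hs
    have h1 : E ^ (N - 1 - s) * ∑ s ∈ Finset.range N, a s • (E ^ s * α) = 0 := by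
      rw [h, mul_zero]
    rw [Finset.mul_sum, Finset.sum_eq_single s] at h1
    · rw [mul_smul_comm, ← mul_assoc, ← pow_add, Nat.sub_add_cancel (by omega)] at h1
      exact (smul_eq_zero.1 h1).resolve_right V.top
    · intro t ht hts
      rw [Finset.mem_range] at ht
      rcases lt_or_gt_of_ne hts with h2 | h2
      · rw [ih t h2 ht, zero_smul, mul_zero]
      · rw [mul_smul_comm, ← mul_assoc, ← pow_add, D.Epow (by omega), zero_mul, smul_zero]
    · intro h2; exact absurd (Finset.mem_range.2 hs) h2

theorem topγ_notin (a : ℕ → k) :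
    E ^ (N - 1) * γ ≠ ∑ s ∈ Finset.range N, a s • (E ^ s * α) := by
  intro h
  have hN := D.N4
  obtain ⟨M, rfl⟩ : ∃ M, N = M + 1 := ⟨N - 1, by omega⟩
  have h1 : ∑ s ∈ Finset.range (M + 1), (if s = 0 then 0 else a (s - 1)) • (E ^ s * α) = 0 := by
    have h2 : E * (E ^ (M + 1 - 1) * γ) = 0 := by
      rw [← mul_assoc, ← pow_succ', D.Epow (by omega), zero_mul]
    rw [h, Finset.mul_sum, Finset.sum_range_succ] at h2
    rw [Finset.sum_range_succ']
    simp only [mul_smul_comm, ← mul_assoc, ← pow_succ'] at h2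
    rw [D.hEN, zero_mul, smul_zero, add_zero] at h2
    simpa using h2
  have h3 : ∀ s < M, a s = 0 := by
    intro s hs
    simpa using indepα D V _ h1 (s + 1) (by omega)
  have h4 : E ^ M * γ = a M • (E ^ M * α) := by
    rw [Finset.sum_range_succ, Finset.sum_eq_zero] at h
    · simpa using h
    · intro s hs; rw [h3 s (Finset.mem_range.1 hs), zero_smul]
  have h5 : L * (E ^ M * γ) = L * (a M • (E ^ M * α)) := by rw [h4]
  rw [mul_smul_comm, ← mul_assoc, ← mul_assoc, L_pow D.hLE, smul_mul_assoc, smul_mul_assoc,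
    mul_assoc, mul_assoc, V.Lα, V.Lγ, mul_smul_comm, mul_smul_comm, h4, smul_smul, smul_smul,
    smul_smul, smul_smul, ← sub_eq_zero, ← sub_smul] at h5
  have hx : q⁻¹ ^ (2 * M) ≠ 0 := pow_ne_zero _ (inv_ne_zero D.q0)
  have h6 := (smul_eq_zero.1 h5).resolve_right V.top
  have h7 : a M = 0 := by
    by_contra hh
    apply wt_ne D V
    have h8 : (q⁻¹ ^ (2 * M) * a M) * (q⁻¹ ^ (2 * i) - q ^ (2 * i - 2)) = 0 := by
      linear_combination h6
    exact (sub_eq_zero.1 ((mul_eq_zero.1 h8).resolve_left (mul_ne_zero hx hh))).symm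
  rw [h7, zero_smul] at h4
  exact topγ D V h4

theorem indep (a b : ℕ → k) (h : ∑ s ∈ Finset.range N, a s • (E ^ s * α) +
    ∑ s ∈ Finset.range N, b s • (E ^ s * γ) = 0) :
    (∀ s < N, a s = 0) ∧ (∀ s < N, b s = 0) := by
  have hb : ∀ s < N, b s = 0 := by
    intro s
    induction s using Nat.strong_induction_on with
    | _ s ih =>
      intro hs
      by_contra hbs
      have h1 : E ^ (N - 1 - s) * (∑ s ∈ Finset.range N, a s • (E ^ s * α) +
          ∑ s ∈ Finset.range N, b s • (E ^ s * γ)) = 0 := by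
        rw [h, mul_zero]
      rw [mul_add, Finset.mul_sum, Finset.mul_sum, Finset.sum_eq_single (a := s)
        (f := fun t => E ^ (N - 1 - s) * b t • (E ^ t * γ))] at h1
      · rw [mul_smul_comm, ← mul_assoc, ← pow_add, Nat.sub_add_cancel (by omega)] at h1
        have hm : ∑ t ∈ Finset.range N, E ^ (N - 1 - s) * a t • (E ^ t * α) ∈
            Submodule.span k (Set.range fun t : Fin N => E ^ (t : ℕ) * α) := by
          refine Submodule.sum_mem _ fun t ht => ?_
          rw [mul_smul_comm, ← mul_assoc, ← pow_add]
          refine Submodule.smul_mem _ _ ?_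
          by_cases hlt : N - 1 - s + t < N
          · exact Submodule.subset_span ⟨⟨_, hlt⟩, rfl⟩
          · rw [D.Epow (by omega), zero_mul]; exact Submodule.zero_mem _
        have hm2 : E ^ (N - 1) * γ ∈
            Submodule.span k (Set.range fun t : Fin N => E ^ (t : ℕ) * α) := by
          have : E ^ (N - 1) * γ = (-(b s)⁻¹) •
              ∑ t ∈ Finset.range N, E ^ (N - 1 - s) * a t • (E ^ t * α) := by
            rw [eq_neg_of_add_eq_zero_left h1, neg_smul, smul_neg, neg_neg, smul_smul,
              inv_mul_cancel₀ hbs, one_smul]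
          rw [this]; exact Submodule.smul_mem _ _ hm
        rw [Submodule.mem_span_range_iff_exists_fun] at hm2
        obtain ⟨c, hc⟩ := hm2
        apply topγ_notin D V (fun s => if h : s < N then c ⟨s, h⟩ else 0)
        rw [← hc, Finset.sum_range]
        simp
      · intro t ht hts
        rw [Finset.mem_range] at ht
        rcases lt_or_gt_of_ne hts with h2 | h2
        · rw [ih t h2 ht, zero_smul, mul_zero]
        · rw [mul_smul_comm, ← mul_assoc, ← pow_add, D.Epow (by omega), zero_mul, smul_zero]
      · intro h2; exact absurd (Finset.mem_range.2 hs) h2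
  refine ⟨?_, hb⟩
  apply indepα D V
  rw [Finset.sum_eq_zero (s := Finset.range N) (f := fun s => b s • (E ^ s * γ)), add_zero] at h
  · exact h
  · intro s hs; rw [hb s (Finset.mem_range.1 hs), zero_smul]

end
end abs
end QFL

namespace QFL

section abs2
variable {k : Type} [Field k] {R : Type} [Ring R] [Algebra k R]
variable {N : ℕ} {q : k} {E F L z : R} (D : Dat N q E F L z)
include D

theorem shift_sum (α : R) (p : ℕ) (hp : p ≤ N) (f : ℕ → k) :
    ∑ t ∈ Finset.range N, f t • (E ^ (t + p) * α) =
      ∑ s ∈ Finset.range N, (if p ≤ s then f (s - p) else 0) • (E ^ s * α) := by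
  obtain ⟨M, hM⟩ : ∃ M, N = p + M := ⟨N - p, by omega⟩
  have h1 : ∑ t ∈ Finset.range N, f t • (E ^ (t + p) * α) =
      ∑ t ∈ Finset.range M, f t • (E ^ (t + p) * α) := by
    rw [hM, add_comm p M, Finset.sum_range_add]
    rw [Finset.sum_eq_zero (s := Finset.range p), add_zero]
    intro t _
    rw [D.Epow (by omega), zero_mul, smul_zero]
  rw [h1, hM, Finset.sum_range_add, Finset.sum_eq_zero (s := Finset.range p), zero_add]
  · refine Finset.sum_congr rfl fun t _ => ?_
    rw [if_pos (by omega), add_comm t p, Nat.add_sub_cancel_left]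
  · intro t ht
    rw [Finset.mem_range] at ht
    rw [if_neg (by omega), zero_smul]

theorem lower_sum (α : R) (a g h : ℕ → k) (hg : ∀ s, g s = gauss k q⁻¹ s * h s) :
    ∑ s ∈ Finset.range N, a s • (g s • (E ^ (s - 1) * α)) =
      ∑ s ∈ Finset.range N, (a (s + 1) * g (s + 1)) • (E ^ s * α) := by
  have hN := D.N4
  have h1 := gauss_N D.hqi (by omega)
  obtain ⟨M, hM⟩ : ∃ M, N = M + 1 := ⟨N - 1, by omega⟩
  rw [hM] at h1 ⊢
  rw [Finset.sum_range_succ', Finset.sum_range_succ, hg 0, hg (M + 1), h1, gauss_zero]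
  simp [smul_smul]

variable {i : ℕ} {ε : k} {α γ : R} (V : Vec N q E F L z i ε α γ)
include V

theorem kerF_aux (a b : ℕ → k) (h : F * (∑ s ∈ Finset.range N, a s • (E ^ s * α) +
    ∑ s ∈ Finset.range N, b s • (E ^ s * γ)) = 0) :
    ∑ s ∈ Finset.range N, a s • (E ^ s * α) + ∑ s ∈ Finset.range N, b s • (E ^ s * γ) =
      a 0 • α + a (2 * i - 1) • (E ^ (2 * i - 1) * α) := by
  have := V.hi; have := V.hiN; have := D.N4
  rw [mul_add, Finset.mul_sum, Finset.mul_sum] at h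
  simp only [mul_smul_comm, FEα D V, FEγ D V, smul_add] at h
  rw [Finset.sum_add_distrib,
    lower_sum D α a (fun s => gauss k q⁻¹ s * (1 - q⁻¹ ^ s * q ^ (2 * i - 1)))
      (fun s => (1 - q⁻¹ ^ s * q ^ (2 * i - 1))) (fun _ => rfl),
    lower_sum D γ b (fun s => gauss k q⁻¹ s * (1 - q⁻¹ ^ (s + 2 * i - 1)))
      (fun s => (1 - q⁻¹ ^ (s + 2 * i - 1))) (fun _ => rfl)] at h
  simp only [smul_smul] at h
  rw [shift_sum D α (2 * i - 2) (by omega) (fun t => b t * q⁻¹ ^ t), ← add_assoc,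
    ← Finset.sum_add_distrib] at h
  simp only [← add_smul] at h
  obtain ⟨hA, hB⟩ := indep D V _ _ h
  have hb : ∀ s < N, b s = 0 := by
    intro t ht
    have hx : q⁻¹ ^ t ≠ 0 := pow_ne_zero _ (inv_ne_zero D.q0)
    by_cases h0 : t = 0
    · subst h0
      have h1 := hA (2 * i - 2) (by omega)
      have e : 2 * i - 2 + 1 = 2 * i - 1 := by omega
      rw [e, cα_zero D V, mul_zero, mul_zero, zero_add, if_pos le_rfl, Nat.sub_self] at h1
      exact (mul_eq_zero.1 h1).resolve_right hx
    by_cases h2 : t = N + 1 - 2 * i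
    · have h1 := hA (N - 1) (by omega)
      have e : N - 1 + 1 = N := by omega
      have e2 : N - 1 - (2 * i - 2) = t := by omega
      rw [e, gauss_N D.hqi (by omega), zero_mul, mul_zero, zero_add, if_pos (by omega), e2] at h1
      exact (mul_eq_zero.1 h1).resolve_right hx
    have h1 := hB (t - 1) (by omega)
    rw [Nat.sub_add_cancel (by omega)] at h1
    exact (mul_eq_zero.1 h1).resolve_right (cγ_ne D V (by omega) ht h2)
  have ha : ∀ s < N, s ≠ 0 → s ≠ 2 * i - 1 → a s = 0 := by
    intro s hs h0 h1
    have h2 := hA (s - 1) (by omega)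
    rw [Nat.sub_add_cancel (by omega)] at h2
    have h3 : (if 2 * i - 2 ≤ s - 1 then b (s - 1 - (2 * i - 2)) * q⁻¹ ^ (s - 1 - (2 * i - 2))
        else 0) = 0 := by
      split_ifs
      · rw [hb _ (by omega), zero_mul]
      · rfl
    rw [h3, add_zero] at h2
    exact (mul_eq_zero.1 h2).resolve_right (cα_ne D V (by omega) hs h1)
  rw [Finset.sum_eq_zero (s := Finset.range N) (f := fun s => b s • (E ^ s * γ)), add_zero,
    Finset.sum_eq_add (a := 0) (b := 2 * i - 1) (by omega)]
  · simp
  · intro s hs hne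
    rw [ha s (Finset.mem_range.1 hs) hne.1 hne.2, zero_smul]
  · intro hh; exact absurd (Finset.mem_range.2 (by omega)) hh
  · intro hh; exact absurd (Finset.mem_range.2 (by omega)) hh
  · intro s hs; rw [hb s (Finset.mem_range.1 hs), zero_smul]

omit V in
theorem coord (x α : R) (h : x ∈ Submodule.span k (Set.range fun t : ℕ => E ^ t * α)) :
    ∃ a : ℕ → k, x = ∑ s ∈ Finset.range N, a s • (E ^ s * α) := by
  have hle : Submodule.span k (Set.range fun t : ℕ => E ^ t * α) ≤
      Submodule.span k (Set.range fun t : Fin N => E ^ (t : ℕ) * α) := by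
    rw [Submodule.span_le]
    rintro _ ⟨t, rfl⟩
    by_cases ht : t < N
    · exact Submodule.subset_span ⟨⟨t, ht⟩, rfl⟩
    · simp only [SetLike.mem_coe]
      rw [D.Epow (by omega), zero_mul]; exact Submodule.zero_mem _
  have h2 := hle h
  rw [Submodule.mem_span_range_iff_exists_fun] at h2
  obtain ⟨c, hc⟩ := h2
  refine ⟨fun s => if h : s < N then c ⟨s, h⟩ else 0, ?_⟩
  rw [← hc, Finset.sum_range]
  simp

theorem EL (α : R) (c : k) (h : L * α = c • α) (s : ℕ) :
    L * (E ^ s * α) = (q⁻¹ ^ (2 * s) * c) • (E ^ s * α) := by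
  rw [← mul_assoc, L_pow D.hLE, smul_mul_assoc, mul_assoc, h, mul_smul_comm, smul_smul]

theorem Ez (α : R) (c : k) (h : z * α = c • α) (s : ℕ) :
    z * (E ^ s * α) = ((-1) ^ s * c) • (E ^ s * α) := by
  rw [← mul_assoc, z_pow (k := k) D.hzE, smul_mul_assoc, mul_assoc, h, mul_smul_comm, smul_smul]

theorem P_coord (x : R) (h : x ∈ Submodule.span R {γ}) : ∃ a b : ℕ → k,
    x = ∑ s ∈ Finset.range N, a s • (E ^ s * α) + ∑ s ∈ Finset.range N, b s • (E ^ s * γ) := by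
  obtain ⟨u, rfl⟩ := Submodule.mem_span_singleton.1 h
  set T : Submodule k R := Submodule.span k (Set.range fun t : ℕ => E ^ t * α) ⊔
    Submodule.span k (Set.range fun t : ℕ => E ^ t * γ) with hT
  have hα : ∀ t, E ^ t * α ∈ T := fun t =>
    Submodule.mem_sup_left (Submodule.subset_span ⟨t, rfl⟩)
  have hγ : ∀ t, E ^ t * γ ∈ T := fun t =>
    Submodule.mem_sup_right (Submodule.subset_span ⟨t, rfl⟩)
  have key : ∀ y : R, (∀ t, y * (E ^ t * α) ∈ T) → (∀ t, y * (E ^ t * γ) ∈ T) →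
      ∀ x ∈ T, y * x ∈ T := by
    intro y h1 h2
    have : T ≤ T.comap (LinearMap.mulLeft k y) := by
      rw [hT, sup_le_iff, Submodule.span_le, Submodule.span_le]
      constructor
      · rintro _ ⟨t, rfl⟩; exact h1 t
      · rintro _ ⟨t, rfl⟩; exact h2 t
    intro x hx
    exact this hx
  have hu : u * γ ∈ T := by
    refine D.gen T ?_ ?_ ?_ ?_ u γ (by simpa using hγ 0)
    · refine key _ (fun t => ?_) (fun t => ?_)
      · rw [EL D V α _ V.Lα]; exact T.smul_mem _ (hα t)
      · rw [EL D V γ _ V.Lγ]; exact T.smul_mem _ (hγ t)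
    · refine key _ (fun t => ?_) (fun t => ?_)
      · rw [Ez D V α _ V.zα]; exact T.smul_mem _ (hα t)
      · rw [Ez D V γ _ V.zγ]; exact T.smul_mem _ (hγ t)
    · refine key _ (fun t => ?_) (fun t => ?_)
      · rw [← mul_assoc, ← pow_succ']; exact hα _
      · rw [← mul_assoc, ← pow_succ']; exact hγ _
    · refine key _ (fun t => ?_) (fun t => ?_)
      · rw [FEα D V]; exact T.smul_mem _ (hα _)
      · rw [FEγ D V]; exact T.add_mem (T.smul_mem _ (hα _)) (T.smul_mem _ (hγ _))
  obtain ⟨y, hy, w, hw, hyw⟩ := Submodule.mem_sup.1 hu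
  obtain ⟨a, ha⟩ := coord D y α hy
  obtain ⟨b, hb⟩ := coord D w γ hw
  exact ⟨a, b, by rw [smul_eq_mul, ← hyw, ha, hb]⟩

theorem kerF (x : R) (h : x ∈ Submodule.span R {γ}) (hF : F * x = 0) :
    ∃ a b : k, x = a • α + b • (E ^ (2 * i - 1) * α) := by
  obtain ⟨a, b, rfl⟩ := P_coord D V x h
  exact ⟨_, _, kerF_aux D V a b hF⟩

theorem wL : L * (E ^ (2 * i - 1) * α) = q⁻¹ ^ (2 * i) • (E ^ (2 * i - 1) * α) := by
  have := V.hi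
  rw [EL D V α _ V.Lα]
  congr 1
  have h : 2 * (2 * i - 1) = 2 * i + (2 * i - 2) := by omega
  rw [h, pow_add, mul_assoc, ← mul_pow, inv_mul_cancel₀ D.q0, one_pow, mul_one]

theorem wz : z * (E ^ (2 * i - 1) * α) = ε • (E ^ (2 * i - 1) * α) := by
  have := V.hi
  rw [Ez D V α _ V.zα]
  congr 1
  have h : Odd (2 * i - 1) := ⟨i - 1, by omega⟩
  rw [h.neg_one_pow]; ring

theorem wF : F * (E ^ (2 * i - 1) * α) = 0 := by
  rw [FEα D V, cα_zero D V, mul_zero, zero_smul]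

theorem w_ne : E ^ (2 * i - 1) * α ≠ 0 := by
  intro h
  have := V.hi; have := V.hiN
  apply V.top
  have : N - 1 = (N - 1 - (2 * i - 1)) + (2 * i - 1) := by omega
  rw [this, pow_add, mul_assoc, h, mul_zero]

theorem w_mem (X : Submodule R R) (hX : X ≤ Submodule.span R {γ}) (h0 : X ≠ ⊥) :
    E ^ (2 * i - 1) * α ∈ X := by
  obtain ⟨x, hx, hx0⟩ := Submodule.exists_mem_ne_zero_of_ne_bot h0
  have hex : ∃ m, F ^ m * x = 0 := ⟨N, by rw [D.hFN, zero_mul]⟩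
  classical
  have hm := Nat.find_spec hex
  have hm1 := fun j => Nat.find_min hex (m := j)
  set m := Nat.find hex
  have hm0 : m ≠ 0 := by
    intro h; rw [h] at hm; simp at hm; exact hx0 hm
  have hy : F ^ (m - 1) * x ∈ X := X.smul_mem (F ^ (m - 1)) hx
  have hy0 := hm1 (m - 1) (by omega)
  have hFy : F * (F ^ (m - 1) * x) = 0 := by
    rw [← mul_assoc, ← pow_succ', Nat.sub_add_cancel (by omega)]; exact hm
  obtain ⟨a, b, hab⟩ := kerF D V _ (hX hy) hFy
  rw [hab] at hy hy0
  have smulX : ∀ (c : k) (y : R), y ∈ X → c • y ∈ X := by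
    intro c y hy
    have := X.smul_mem (algebraMap k R c) hy
    rwa [smul_eq_mul, ← Algebra.smul_def] at this
  by_cases ha : a = 0
  · subst ha
    rw [zero_smul, zero_add] at hy hy0
    have hb : b ≠ 0 := by rintro rfl; simp at hy0
    have := smulX b⁻¹ _ hy
    rwa [smul_smul, inv_mul_cancel₀ hb, one_smul] at this
  · have h1 : L * (a • α + b • (E ^ (2 * i - 1) * α)) ∈ X := X.smul_mem L hy
    have h2 := X.sub_mem h1 (smulX (q⁻¹ ^ (2 * i)) _ hy)
    rw [mul_add, mul_smul_comm, mul_smul_comm, wL D V, V.Lα] at h2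
    have h3 : a • q ^ (2 * i - 2) • α + b • q⁻¹ ^ (2 * i) • (E ^ (2 * i - 1) * α) -
        q⁻¹ ^ (2 * i) • (a • α + b • (E ^ (2 * i - 1) * α)) =
        (a * (q ^ (2 * i - 2) - q⁻¹ ^ (2 * i))) • α := by module
    rw [h3] at h2
    have h4 : a * (q ^ (2 * i - 2) - q⁻¹ ^ (2 * i)) ≠ 0 :=
      mul_ne_zero ha (sub_ne_zero.2 (wt_ne D V))
    have h5 := smulX (a * (q ^ (2 * i - 2) - q⁻¹ ^ (2 * i)))⁻¹ _ h2
    rw [smul_smul, inv_mul_cancel₀ h4, one_smul] at h5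
    exact X.smul_mem (E ^ (2 * i - 1)) h5

theorem α_mem : E ^ (2 * i - 1) * α ∈ Submodule.span R {γ} := by
  have h1 : F * γ ∈ Submodule.span R {γ} :=
    Submodule.smul_mem _ F (Submodule.mem_span_singleton_self γ)
  rw [V.Fγ] at h1
  have h2 := Submodule.smul_mem _ E h1
  rw [smul_eq_mul, ← mul_assoc, ← pow_succ'] at h2
  have e : 2 * i - 2 + 1 = 2 * i - 1 := by have := V.hi; omega
  rwa [e] at h2

theorem soc_eq : sSup {X : Submodule R R | X ≤ Submodule.span R {γ} ∧ IsSimpleModule R X} =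
    Submodule.span R {E ^ (2 * i - 1) * α} := by
  have hWP : Submodule.span R {E ^ (2 * i - 1) * α} ≤ Submodule.span R {γ} := by
    rw [Submodule.span_le, Set.singleton_subset_iff]; exact α_mem D V
  apply le_antisymm
  · apply sSup_le
    rintro X ⟨hX, hs⟩
    have hat : IsAtom X := isSimpleModule_iff_isAtom.1 hs
    have hw := w_mem D V X hX hat.1
    have hle : Submodule.span R {E ^ (2 * i - 1) * α} ≤ X := by
      rw [Submodule.span_le, Set.singleton_subset_iff]; exact hw
    rcases hat.le_iff.1 hle with h | h
    · exact absurd (Submodule.span_singleton_eq_bot.1 h) (w_ne D V)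
    · exact h.ge
  · apply le_sSup
    refine ⟨hWP, isSimpleModule_iff_isAtom.2 ⟨?_, ?_⟩⟩
    · intro h; exact absurd (Submodule.span_singleton_eq_bot.1 h) (w_ne D V)
    · intro X hX
      by_contra h0
      have hw := w_mem D V X (hX.le.trans hWP) h0
      apply hX.not_ge
      rw [Submodule.span_le, Set.singleton_subset_iff]; exact hw

/-- A nonzero vector killed by `F` in the socle is a multiple of `w`. -/
theorem kerF_W (x : R) (h : x ∈ Submodule.span R {E ^ (2 * i - 1) * α}) (hF : F * x = 0) :
    ∃ b : k, x = b • (E ^ (2 * i - 1) * α) := by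
  have hhi := V.hi; have hhiN := V.hiN; have := D.N4
  have hWP : Submodule.span R {E ^ (2 * i - 1) * α} ≤ Submodule.span R {γ} := by
    rw [Submodule.span_le, Set.singleton_subset_iff]; exact α_mem D V
  obtain ⟨a, b, hab⟩ := kerF D V x (hWP h) hF
  by_cases ha : a = 0
  · exact ⟨b, by rw [hab, ha, zero_smul, zero_add]⟩
  exfalso
  -- every element of W is killed by `E ^ (N - (2 i - 1))`, or rather lies in `E^(2i-1) k[E] α`
  obtain ⟨u, hu⟩ := Submodule.mem_span_singleton.1 h
  set T : Submodule k R := Submodule.span k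
    (Set.range fun t : ℕ => E ^ t * (E ^ (2 * i - 1) * α)) with hT
  have hα : ∀ t, E ^ t * (E ^ (2 * i - 1) * α) ∈ T := fun t => Submodule.subset_span ⟨t, rfl⟩
  have key : ∀ y : R, (∀ t, y * (E ^ t * (E ^ (2 * i - 1) * α)) ∈ T) → ∀ x ∈ T, y * x ∈ T := by
    intro y h1
    have : T ≤ T.comap (LinearMap.mulLeft k y) := by
      rw [hT, Submodule.span_le]
      rintro _ ⟨t, rfl⟩; exact h1 t
    intro x hx
    exact this hx
  have hxT : u * (E ^ (2 * i - 1) * α) ∈ T := by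
    refine D.gen T ?_ ?_ ?_ ?_ u _ (by simpa using hα 0)
    · refine key _ (fun t => ?_)
      rw [EL D V _ _ (wL D V)]; exact T.smul_mem _ (hα t)
    · refine key _ (fun t => ?_)
      rw [Ez D V _ _ (wz D V)]; exact T.smul_mem _ (hα t)
    · refine key _ (fun t => ?_)
      rw [← mul_assoc, ← pow_succ']; exact hα _
    · refine key _ (fun t => ?_)
      rcases t with _ | t
      · rw [pow_zero, one_mul, wF D V]; exact T.zero_mem
      · rw [← mul_assoc (E ^ (t + 1)), ← pow_add, FEα D V]
        refine T.smul_mem _ ?_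
        have e : t + 1 + (2 * i - 1) - 1 = t + (2 * i - 1) := by omega
        rw [e, pow_add, mul_assoc]; exact hα t
  obtain ⟨c, hc⟩ := coord D _ _ hxT
  rw [smul_eq_mul] at hu
  rw [hu, hab] at hc
  have h1 : E ^ (N - 1) * (a • α + b • (E ^ (2 * i - 1) * α)) = 0 := by
    rw [hc, Finset.mul_sum]
    refine Finset.sum_eq_zero fun s _ => ?_
    rw [mul_smul_comm, ← mul_assoc, ← mul_assoc, ← pow_add, ← pow_add, D.Epow (by omega), zero_mul,
      smul_zero]
  rw [mul_add, mul_smul_comm, mul_smul_comm, ← mul_assoc, ← pow_add, D.Epow (s := N - 1 + _)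
    (by omega), zero_mul, smul_zero, add_zero] at h1
  exact V.top ((smul_eq_zero.1 h1).resolve_left ha)

theorem iso_imp {i' : ℕ} {ε' : k} {α' γ' : R} (V' : Vec N q E F L z i' ε' α' γ')
    (f : Submodule.span R {E ^ (2 * i - 1) * α} ≃ₗ[R] Submodule.span R {E ^ (2 * i' - 1) * α'}) :
    i = i' ∧ ε = ε' := by
  set w : Submodule.span R {E ^ (2 * i - 1) * α} := ⟨_, Submodule.mem_span_singleton_self _⟩
  have hw0 : w ≠ 0 := by
    intro h; exact w_ne D V (congrArg Subtype.val h)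
  have hf0 : (f w : R) ≠ 0 := by
    intro h
    apply hw0
    have : f w = 0 := Subtype.ext h
    simpa using this
  have hact : ∀ (y : R) (c : k), y * (E ^ (2 * i - 1) * α) = c • (E ^ (2 * i - 1) * α) →
      y * (f w : R) = c • (f w : R) := by
    intro y c h
    have h1 : y • w = (algebraMap k R c) • w := by
      apply Subtype.ext
      change y * (E ^ (2 * i - 1) * α) = algebraMap k R c * (E ^ (2 * i - 1) * α)
      rw [h, Algebra.smul_def]
    have h2 : y • f w = (algebraMap k R c) • f w := by
      rw [← map_smul, h1, map_smul]
    have h3 := congrArg Subtype.val h2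
    change y * (f w : R) = algebraMap k R c * (f w : R) at h3
    rw [h3, Algebra.smul_def]
  have hF := hact F 0 (by rw [wF D V, zero_smul])
  have hL := hact L _ (wL D V)
  have hz := hact z _ (wz D V)
  rw [zero_smul] at hF
  obtain ⟨b, hb⟩ := kerF_W D V' _ (f w).2 hF
  rw [hb] at hL hz hf0
  rw [mul_smul_comm, wL D V', smul_comm] at hL
  rw [mul_smul_comm, wz D V', smul_comm] at hz
  have hL2 := smul_left_injective k hf0 hL
  have hz2 := smul_left_injective k hf0 hz
  refine ⟨?_, hz2.symm⟩
  have := V.hi; have := V.hiN; have := V'.hi; have := V'.hiN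
  replace hL2 : q⁻¹ ^ (2 * i') = q⁻¹ ^ (2 * i) := hL2
  rcases eq_or_lt_of_le V.hiN with h2 | h2 <;> rcases eq_or_lt_of_le V'.hiN with h3 | h3
  · omega
  · rw [h2, D.hqi.pow_eq_one] at hL2
    exact absurd hL2 (D.hqi.pow_ne_one_of_pos_of_lt (by omega) h3)
  · rw [h3, D.hqi.pow_eq_one] at hL2
    exact absurd hL2.symm (D.hqi.pow_ne_one_of_pos_of_lt (by omega) h2)
  · have := D.hqi.pow_inj h3 h2 hL2
    omega

end abs2
end QFL

namespace QFL

section rep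
variable (k : Type) [Field k] (N : ℕ)

abbrev Vm := (Fin N × Fin N) →₀ k

def bv (a b : ℕ) : Vm k N :=
  if h : a < N ∧ b < N then Finsupp.single (⟨a, h.1⟩, ⟨b, h.2⟩) 1 else 0

def dcoef (q l : k) (a b : ℕ) : k := -(gauss k q a * (q - q ^ a * q⁻¹ ^ (2 * b) * l))

def opF : Module.End k (Vm k N) :=
  Finsupp.linearCombination k (fun p : Fin N × Fin N => bv k N ((p.1 : ℕ) + 1) p.2)

def opE (q l : k) : Module.End k (Vm k N) :=
  Finsupp.linearCombination k (fun p : Fin N × Fin N =>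
    q ^ (p.1 : ℕ) • bv k N p.1 (p.2 + 1) + dcoef k q l p.1 p.2 • bv k N (p.1 - 1) p.2)

def opD (c m : k) : Module.End k (Vm k N) :=
  Finsupp.linearCombination k (fun p : Fin N × Fin N =>
    (c * m ^ (p.2 : ℕ) * m⁻¹ ^ (p.1 : ℕ)) • bv k N p.1 p.2)

variable {k N}

theorem bv_zero {a b : ℕ} (h : N ≤ a ∨ N ≤ b) : bv k N a b = 0 := by
  rw [bv, dif_neg (by omega)]

theorem bv_pos {a b : ℕ} (ha : a < N) (hb : b < N) :
    bv k N a b = Finsupp.single (⟨a, ha⟩, ⟨b, hb⟩) 1 := by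
  rw [bv, dif_pos ⟨ha, hb⟩]

theorem bv_ext {M : Type} [AddCommGroup M] [Module k M] {f g : Vm k N →ₗ[k] M}
    (h : ∀ a b, a < N → b < N → f (bv k N a b) = g (bv k N a b)) :
    f = g := by
  apply Finsupp.lhom_ext
  rintro ⟨a, b⟩ c
  have := h a b a.2 b.2
  rw [bv_pos a.2 b.2] at this
  have h2 : Finsupp.single (a, b) c = c • Finsupp.single (a, b) (1 : k) := by simp
  rw [h2, map_smul, map_smul, this]

theorem opF_bv (a b : ℕ) : opF k N (bv k N a b) = bv k N (a + 1) b := by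
  by_cases h : a < N ∧ b < N
  · rw [bv_pos h.1 h.2, opF, Finsupp.linearCombination_single, one_smul]
  · rw [bv_zero (by omega), map_zero, bv_zero (by omega)]

theorem opD_bv (c m : k) (a b : ℕ) :
    opD k N c m (bv k N a b) = (c * m ^ b * m⁻¹ ^ a) • bv k N a b := by
  by_cases h : a < N ∧ b < N
  · rw [bv_pos h.1 h.2, opD, Finsupp.linearCombination_single, one_smul, bv_pos h.1 h.2]
  · rw [bv_zero (by omega), map_zero, smul_zero]

theorem opE_bv {q : k} (hq : IsPrimitiveRoot q N) (hN : 1 < N) (l : k) (a b : ℕ) :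
    opE k N q l (bv k N a b) = q ^ a • bv k N a (b + 1) + dcoef k q l a b • bv k N (a - 1) b := by
  by_cases h : a < N ∧ b < N
  · rw [bv_pos h.1 h.2, opE, Finsupp.linearCombination_single, one_smul]
  · rw [bv_zero (by omega), map_zero, bv_zero (by omega), smul_zero, zero_add]
    by_cases h2 : N ≤ b
    · rw [bv_zero (by omega), smul_zero]
    · by_cases h3 : a = N
      · rw [h3, dcoef, gauss_N hq hN]; simp
      · rw [bv_zero (by omega), smul_zero]

theorem dcoef_zero (q l : k) (b : ℕ) : dcoef k q l 0 b = 0 := by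
  simp [dcoef, gauss_zero]

theorem opFpow (s a b : ℕ) : (opF k N ^ s) (bv k N a b) = bv k N (a + s) b := by
  induction s with
  | zero => simp
  | succ s ih => rw [pow_succ', Module.End.mul_apply, ih, opF_bv]; rfl

theorem opEpow0 {q : k} (hq : IsPrimitiveRoot q N) (hN : 1 < N) (l : k) (s b : ℕ) :
    (opE k N q l ^ s) (bv k N 0 b) = bv k N 0 (b + s) := by
  induction s with
  | zero => simp
  | succ s ih =>
    rw [pow_succ', Module.End.mul_apply, ih, opE_bv hq hN, dcoef_zero]; simp [add_assoc]

theorem opD_E {q : k} (hq : IsPrimitiveRoot q N) (hN : 1 < N) (l c : k) {m : k} (hm : m ≠ 0) :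
    opD k N c m * opE k N q l = m • (opE k N q l * opD k N c m) := by
  apply bv_ext
  intro a b _ _
  rw [LinearMap.smul_apply, Module.End.mul_apply, Module.End.mul_apply, opD_bv, map_smul,
    opE_bv hq hN, map_add, map_smul, map_smul, opD_bv, opD_bv]
  rcases a with _ | a
  · rw [dcoef_zero]; module
  · have : m⁻¹ ^ a = m * m⁻¹ ^ (a + 1) := by
      rw [pow_succ', ← mul_assoc, mul_inv_cancel₀ hm, one_mul]
    rw [Nat.add_sub_cancel, this]
    module

theorem opD_F (c : k) (m : k) :
    opD k N c m * opF k N = m⁻¹ • (opF k N * opD k N c m) := by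
  apply bv_ext
  intro a b _ _
  rw [LinearMap.smul_apply, Module.End.mul_apply, Module.End.mul_apply, opD_bv, map_smul,
    opF_bv, opD_bv]
  module

theorem opD_mul (c m c' m' : k) : opD k N c m * opD k N c' m' = opD k N (c * c') (m * m') := by
  apply bv_ext
  intro a b _ _
  rw [Module.End.mul_apply, opD_bv, map_smul, opD_bv, opD_bv, smul_smul]
  congr 1
  rw [mul_inv, mul_pow, mul_pow]
  ring

theorem opD_one : opD k N 1 1 = 1 := by
  apply bv_ext
  intro a b _ _
  rw [opD_bv]; simp

theorem opD_pow (c m : k) (s : ℕ) : opD k N c m ^ s = opD k N (c ^ s) (m ^ s) := by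
  induction s with
  | zero => simp [opD_one]
  | succ s ih => rw [pow_succ, ih, opD_mul, pow_succ, pow_succ]

theorem op_FE {q : k} (hq : IsPrimitiveRoot q N) (hN : 1 < N) (l : k) :
    opF k N * opE k N q l = q⁻¹ • (opE k N q l * opF k N) + (1 - opD k N l (q⁻¹ ^ 2)) := by
  have hq0 : q ≠ 0 := hq.ne_zero (by omega)
  apply bv_ext
  intro a b _ _
  rw [LinearMap.add_apply, LinearMap.sub_apply, LinearMap.smul_apply, Module.End.mul_apply,
    Module.End.mul_apply, opF_bv, opD_bv, opE_bv hq hN, opE_bv hq hN, map_add, map_smul, map_smul,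
    opF_bv, opF_bv, Module.End.one_apply, Nat.add_sub_cancel]
  have h1 : dcoef k q l a b • bv k N (a - 1 + 1) b = dcoef k q l a b • bv k N a b := by
    rcases a with _ | a
    · rw [dcoef_zero, zero_smul, zero_smul]
    · simp
  have h2 : dcoef k q l a b = q⁻¹ * dcoef k q l (a + 1) b + (1 - l * (q⁻¹ ^ 2) ^ b *
      (q⁻¹ ^ 2)⁻¹ ^ a) := by
    have hg := gauss_mul q a
    rw [dcoef, dcoef, gauss_succ', pow_succ q a, pow_mul]
    have e1 : (q⁻¹ ^ 2)⁻¹ ^ a = q ^ a * q ^ a := by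
      rw [← inv_pow, inv_inv, ← pow_mul, two_mul, pow_add]
    rw [e1]
    generalize q⁻¹ ^ 2 = y
    field_simp
    linear_combination (-(l * y ^ b * q ^ a)) * hg
  have h3 : q⁻¹ * q ^ (a + 1) = q ^ a := by rw [pow_succ', ← mul_assoc, inv_mul_cancel₀ hq0, one_mul]
  rw [h1, h2, smul_add, smul_smul, h3]
  module

theorem op_EN {q : k} (hq : IsPrimitiveRoot q N) (hN : 1 < N) (l : k) : opE k N q l ^ N = 0 := by
  have hq0 : q ≠ 0 := hq.ne_zero (by omega)
  have h1 : opF k N * opE k N q l ^ N = opE k N q l ^ N * opF k N := by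
    rw [FE_pow (R := Module.End k (Vm k N)) (L := opD k N l (q⁻¹ ^ 2)) hq0
      (opD_E hq hN l l (pow_ne_zero 2 (inv_ne_zero hq0))) (op_FE hq hN l),
      gauss_N hq.inv hN, hq.inv.pow_eq_one]
    simp
  have h2 : Commute (opE k N q l ^ N) (opF k N) := h1.symm
  apply bv_ext
  intro a b _ _
  have h3 : bv k N a b = (opF k N ^ a) (bv k N 0 b) := by rw [opFpow, zero_add]
  rw [h3, ← Module.End.mul_apply, (h2.pow_right a).eq, Module.End.mul_apply, opEpow0 hq hN,
    bv_zero (by omega), map_zero, LinearMap.zero_apply]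

theorem op_FN : opF k N ^ N = 0 := by
  apply bv_ext
  intro a b _ _
  rw [opFpow, bv_zero (by omega), LinearMap.zero_apply]

/-- coefficient functional at `(N-1, b)` -/
theorem top_coef {q : k} (hq : IsPrimitiveRoot q N) (hN : 1 < N) (l : k) (s : ℕ) (hs : s < N) :
    ((opE k N q l ^ s) (bv k N (N - 1) 0)) (⟨N - 1, by omega⟩, ⟨s, hs⟩) ≠ 0 := by
  have hq0 : q ≠ 0 := hq.ne_zero (by omega)
  induction s with
  | zero => rw [pow_zero, Module.End.one_apply, bv_pos (by omega) (by omega)]; simp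
  | succ s ih =>
    have ih := ih (by omega)
    rw [pow_succ', Module.End.mul_apply]
    generalize (opE k N q l ^ s) (bv k N (N - 1) 0) = w at ih
    have h : Finsupp.lapply (R := k) ((⟨N - 1, by omega⟩, ⟨s + 1, hs⟩) : Fin N × Fin N) ∘ₗ
        opE k N q l = q ^ (N - 1) • Finsupp.lapply
          ((⟨N - 1, by omega⟩, ⟨s, by omega⟩) : Fin N × Fin N) := by
      apply bv_ext
      intro a b ha hb
      rw [LinearMap.comp_apply, opE_bv hq hN, LinearMap.smul_apply, Finsupp.lapply_apply,
        Finsupp.lapply_apply, Finsupp.add_apply, Finsupp.smul_apply, Finsupp.smul_apply]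
      have e1 : (bv k N (a - 1) b) (⟨N - 1, by omega⟩, ⟨s + 1, hs⟩) = 0 := by
        rw [bv_pos (by omega) hb, Finsupp.single_apply, if_neg]
        simp only [Prod.mk.injEq, Fin.mk.injEq]; omega
      rw [e1, smul_zero, add_zero, bv_pos ha hb, Finsupp.single_apply]
      by_cases hb1 : b + 1 < N
      · rw [bv_pos ha hb1, Finsupp.single_apply]
        simp only [Prod.mk.injEq, Fin.mk.injEq, Nat.add_right_cancel_iff]
        split_ifs with h1
        · rw [h1.1]
        · simp
      · rw [bv_zero (by omega), if_neg]
        · simp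
        · simp only [Prod.mk.injEq, Fin.mk.injEq]; omega
    have h2 := LinearMap.congr_fun h w
    simp only [LinearMap.comp_apply, Finsupp.lapply_apply, LinearMap.smul_apply, smul_eq_mul] at h2
    rw [h2]
    exact mul_ne_zero (pow_ne_zero _ hq0) ih

end rep

section hom
variable {k : Type} [Field k] {n : ℕ} {q : k}

/-- The representation of `U` on `Vm` attached to a character. -/
theorem exists_rep (hn : 2 ≤ n) (hq : IsPrimitiveRoot q (n ^ 2)) (κ l : k)
    (hκ : κ ^ n = 1) (hl : l ^ n = (κ ^ (n - 1)) ^ 2) :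
    ∃ ρ : U k n q →ₐ[k] Module.End k (Vm k (n ^ 2)),
      ρ (K k n q) = opD k (n ^ 2) κ (q ^ n) ∧
      ρ (Kh k n q) = opD k (n ^ 2) (κ * l) (q ^ n * (q ^ 2)⁻¹) ∧
      ρ (E k n q) = opE k (n ^ 2) q l ∧ ρ (F k n q) = opF k (n ^ 2) := by
  have hN : 1 < n ^ 2 := by nlinarith
  have hq0 : q ≠ 0 := hq.ne_zero (by omega)
  have hqn : q ^ n ≠ 0 := pow_ne_zero _ hq0
  have hqh : q ^ n * (q ^ 2)⁻¹ ≠ 0 := mul_ne_zero hqn (inv_ne_zero (pow_ne_zero _ hq0))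
  have hqnn : (q ^ n) ^ n = 1 := by rw [← pow_mul, ← pow_two]; exact hq.pow_eq_one
  have hnn : n - 1 + 1 = n := by omega
  have hNN : n ^ 2 - 1 + 1 = n ^ 2 := by omega
  have hK : opD k (n ^ 2) κ (q ^ n) ^ n = 1 := by rw [opD_pow, hκ, hqnn, opD_one]
  have hln : (κ ^ (n - 1)) ^ 2 * κ ^ 2 = 1 := by
    rw [← mul_pow, ← pow_succ, hnn, hκ, one_pow]
  have hKh : opD k (n ^ 2) (κ * l) (q ^ n * (q ^ 2)⁻¹) ^ n ^ 2 = 1 := by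
    have e1 : (κ * l) ^ n ^ 2 = 1 := by
      rw [mul_pow, pow_two n, pow_mul, hκ, one_pow, one_mul, pow_mul, hl, ← pow_mul, ← pow_mul,
        ← mul_assoc, mul_comm, pow_mul, hκ, one_pow]
    have e2 : (q ^ n * (q ^ 2)⁻¹) ^ n ^ 2 = 1 := by
      rw [mul_pow, inv_pow, ← pow_mul, mul_comm n, pow_mul, hq.pow_eq_one, ← pow_mul, mul_comm 2,
        pow_mul, hq.pow_eq_one]; simp
    rw [opD_pow, e1, e2, opD_one]
  let φ : FreeAlgebra k (Fin 4) →ₐ[k] Module.End k (Vm k (n ^ 2)) :=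
    FreeAlgebra.lift k ![opD k (n ^ 2) κ (q ^ n), opD k (n ^ 2) (κ * l) (q ^ n * (q ^ 2)⁻¹),
      opE k (n ^ 2) q l, opF k (n ^ 2)]
  have φ0 : φ (FreeAlgebra.ι k 0) = opD k (n ^ 2) κ (q ^ n) := by simp [φ]
  have φ1 : φ (FreeAlgebra.ι k 1) = opD k (n ^ 2) (κ * l) (q ^ n * (q ^ 2)⁻¹) := by simp [φ]
  have φ2 : φ (FreeAlgebra.ι k 2) = opE k (n ^ 2) q l := by simp [φ]
  have φ3 : φ (FreeAlgebra.ι k 3) = opF k (n ^ 2) := by simp [φ]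
  have hrel : ∀ ⦃x y⦄, Rel k n q x y → φ x = φ y := by
    intro x y h
    induction h with
    | Kord => rw [map_pow, φ0, hK, map_one]
    | Khord =>
      rw [map_pow, map_pow, map_pow, φ0, φ1, opD_pow, opD_pow, opD_pow]
      congr 1
      · rw [mul_pow, hκ, hl, one_mul]
      · rw [mul_pow, hqnn, one_mul, inv_pow, ← pow_mul]
        rw [← mul_left_inj' (pow_ne_zero 2 hqn)]
        rw [← mul_pow ((q ^ n) ^ (n - 1)), ← pow_succ, hnn, hqnn, one_pow, ← pow_mul, mul_comm n 2,
          inv_mul_cancel₀ (pow_ne_zero _ hq0)]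
    | KKh => rw [map_mul, map_mul, φ0, φ1, opD_mul, opD_mul, mul_comm κ, mul_comm (q ^ n)]
    | KE =>
      rw [map_mul, map_mul, map_pow, map_smul, φ0, φ2, opD_E hq hN l _ hqn, smul_mul_assoc,
        mul_assoc, ← pow_succ', hnn, hK, mul_one]
    | KF =>
      rw [map_mul, map_mul, map_pow, map_smul, φ0, φ3, opD_F, smul_mul_assoc,
        mul_assoc, ← pow_succ', hnn, hK, mul_one]
    | KhE =>
      rw [map_mul, map_mul, map_pow, map_smul, φ1, φ2, opD_E hq hN l _ hqh, smul_mul_assoc,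
        mul_assoc, ← pow_succ', hNN, hKh, mul_one]
    | KhF =>
      rw [map_mul, map_mul, map_pow, map_smul, φ1, φ3, opD_F, smul_mul_assoc,
        mul_assoc, ← pow_succ', hNN, hKh, mul_one, mul_inv, inv_inv]
    | Enil => rw [map_pow, map_zero, φ2, op_EN hq hN]
    | Fnil => rw [map_pow, map_zero, φ3, op_FN]
    | EF =>
      rw [map_sub, map_sub, map_smul, map_mul, map_mul, map_mul, map_pow, map_one, φ0, φ1, φ2, φ3,
        op_FE hq hN, opD_pow, opD_mul, ← mul_assoc, ← mul_assoc, ← pow_succ, ← pow_succ, hnn, hκ,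
        hqnn, one_mul, one_mul, inv_pow]
      abel
  refine ⟨RingQuot.liftAlgHom k ⟨φ, hrel⟩, ?_, ?_, ?_, ?_⟩
  · rw [K, RingQuot.liftAlgHom_mkAlgHom_apply, φ0]
  · rw [Kh, RingQuot.liftAlgHom_mkAlgHom_apply, φ1]
  · rw [E, RingQuot.liftAlgHom_mkAlgHom_apply, φ2]
  · rw [F, RingQuot.liftAlgHom_mkAlgHom_apply, φ3]

end hom
end QFL

namespace QFL

section rels
variable {k : Type} [Field k] {n : ℕ} {q : k}

local notation "Kq" => K k n q
local notation "Hq" => Kh k n q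
local notation "Eg" => E k n q
local notation "Fq" => F k n q
local notation "Lq" => Kinv k n q * Kh k n q
local notation "Zq" => K k n q * Kh k n q ^ (n / 2)

theorem rK : Kq ^ n = 1 := by
  have := RingQuot.mkAlgHom_rel k (Rel.Kord (k := k) (n := n) (q := q))
  simpa [K] using this

theorem rKh : Hq ^ n = (Kq ^ (n - 1)) ^ 2 := by
  have := RingQuot.mkAlgHom_rel k (Rel.Khord (k := k) (n := n) (q := q))
  simpa [K, Kh] using this

theorem rcomm : Commute Kq Hq := by
  have := RingQuot.mkAlgHom_rel k (Rel.KKh (k := k) (n := n) (q := q))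
  rw [map_mul, map_mul] at this
  exact this

theorem rKhN (hn : 0 < n) : Hq ^ n ^ 2 = 1 := by
  rw [pow_two, pow_mul, rKh, ← pow_mul, ← pow_mul, ← mul_assoc, mul_comm, pow_mul, rK, one_pow]

theorem conj_aux {R : Type} [Ring R] [Algebra k R] {x y : R} {m : ℕ} (hm : 0 < m) (hx : x ^ m = 1)
    {c : k} (h : x * y * x ^ (m - 1) = c • y) : x * y = c • (y * x) := by
  rw [← smul_mul_assoc, ← h, mul_assoc, ← pow_succ, Nat.sub_add_cancel hm, hx, mul_one]

theorem rKE (hn : 0 < n) : Kq * Eg = q ^ n • (Eg * Kq) := by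
  have := RingQuot.mkAlgHom_rel k (Rel.KE (k := k) (n := n) (q := q))
  rw [map_mul, map_mul, map_pow, map_smul] at this
  exact conj_aux hn rK this

theorem rKF (hn : 0 < n) : Kq * Fq = (q ^ n)⁻¹ • (Fq * Kq) := by
  have := RingQuot.mkAlgHom_rel k (Rel.KF (k := k) (n := n) (q := q))
  rw [map_mul, map_mul, map_pow, map_smul] at this
  exact conj_aux hn rK this

theorem rHE (hn : 0 < n) : Hq * Eg = (q ^ n * (q ^ 2)⁻¹) • (Eg * Hq) := by
  have := RingQuot.mkAlgHom_rel k (Rel.KhE (k := k) (n := n) (q := q))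
  rw [map_mul, map_mul, map_pow, map_smul] at this
  exact conj_aux (by positivity) (rKhN hn) this

theorem rHF (hn : 0 < n) : Hq * Fq = ((q ^ n)⁻¹ * q ^ 2) • (Fq * Hq) := by
  have := RingQuot.mkAlgHom_rel k (Rel.KhF (k := k) (n := n) (q := q))
  rw [map_mul, map_mul, map_pow, map_smul] at this
  exact conj_aux (by positivity) (rKhN hn) this

theorem rEN : Eg ^ n ^ 2 = 0 := by
  have := RingQuot.mkAlgHom_rel k (Rel.Enil (k := k) (n := n) (q := q))
  rw [map_pow, map_zero] at this
  exact this

theorem rFN : Fq ^ n ^ 2 = 0 := by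
  have := RingQuot.mkAlgHom_rel k (Rel.Fnil (k := k) (n := n) (q := q))
  rw [map_pow, map_zero] at this
  exact this

theorem rEF : Fq * Eg = q⁻¹ • (Eg * Fq) + (1 - Lq) := by
  have := RingQuot.mkAlgHom_rel k (Rel.EF (k := k) (n := n) (q := q))
  rw [map_sub, map_sub, map_smul, map_mul, map_mul, map_mul, map_pow, map_one] at this
  rw [← sub_eq_iff_eq_add']
  exact this

theorem pow_qcomm {R : Type} [Ring R] [Algebra k R] {x y : R} {c : k}
    (h : x * y = c • (y * x)) (s : ℕ) : x ^ s * y = c ^ s • (y * x ^ s) := by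
  induction s with
  | zero => simp
  | succ s ih =>
    rw [pow_succ, mul_assoc, h, mul_smul_comm, ← mul_assoc, ih, smul_mul_assoc, smul_smul,
      mul_assoc, pow_succ']

theorem qcomm_pow {R : Type} [Ring R] [Algebra k R] {x y : R} {c : k}
    (h : x * y = c • (y * x)) (s : ℕ) : x * y ^ s = c ^ s • (y ^ s * x) := by
  induction s with
  | zero => simp
  | succ s ih =>
    rw [pow_succ, ← mul_assoc, ih, smul_mul_assoc, mul_assoc, h, mul_smul_comm, smul_smul,
      mul_assoc, pow_succ c]

theorem mul_qcomm {R : Type} [Ring R] [Algebra k R] {x x' y : R} {c c' : k}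
    (h : x * y = c • (y * x)) (h' : x' * y = c' • (y * x')) :
    (x * x') * y = (c * c') • (y * (x * x')) := by
  rw [mul_assoc, h', mul_smul_comm, ← mul_assoc, h, smul_mul_assoc, smul_smul, mul_assoc,
    mul_comm c']

theorem neg_aux {R : Type} [Ring R] [Algebra k R] {x y : R} {c : k} (hc : c = -1)
    (h : x = c • y) : x = -y := by
  rw [h, hc, neg_smul, one_smul]

variable (hn : 0 < n) (h4 : 4 ∣ n) (hq : IsPrimitiveRoot q (n ^ 2))
include hn hq

theorem hq0 : q ≠ 0 := hq.ne_zero (by positivity)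

theorem qnn : (q ^ n) ^ n = 1 := by rw [← pow_mul, ← pow_two]; exact hq.pow_eq_one

theorem qn1 : (q ^ n) ^ (n - 1) = (q ^ n)⁻¹ := by
  apply eq_inv_of_mul_eq_one_left
  rw [← pow_succ, Nat.sub_add_cancel hn, qnn hn hq]

theorem rLE : Lq * Eg = (q⁻¹ ^ 2) • (Eg * (Lq)) := by
  have h := mul_qcomm (pow_qcomm (rKE (k := k) (q := q) hn) (n - 1)) (rHE hn)
  rw [qn1 hn hq, ← mul_assoc, inv_mul_cancel₀ (pow_ne_zero _ (hq0 hn hq)), one_mul, ← inv_pow] at h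
  exact h

theorem rLF : Lq * Fq = (q ^ 2) • (Fq * (Lq)) := by
  have h := mul_qcomm (pow_qcomm (rKF (k := k) (q := q) hn) (n - 1)) (rHF hn)
  rw [inv_pow, qn1 hn hq, inv_inv, ← mul_assoc, mul_inv_cancel₀ (pow_ne_zero _ (hq0 hn hq)),
    one_mul] at h
  exact h

theorem qhalf : q ^ (n ^ 2 / 2) = -1 ∨ ¬ 2 ∣ n := by
  by_cases h2 : 2 ∣ n
  · left
    have h : n ^ 2 / 2 * 2 = n ^ 2 := Nat.div_mul_cancel (h2.trans (Dvd.intro_left _ (by ring_nf)))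
    have h1 : q ^ (n ^ 2 / 2) * q ^ (n ^ 2 / 2) = 1 := by
      rw [← pow_add, ← mul_two, h, hq.pow_eq_one]
    rcases mul_self_eq_one_iff.1 h1 with h3 | h3
    · have hp : 0 < n ^ 2 := by positivity
      exact absurd h3 (hq.pow_ne_one_of_pos_of_lt (by omega) (by omega))
    · exact h3
  · exact Or.inr h2

include h4

theorem zcoef : q ^ n * (q ^ n * (q ^ 2)⁻¹) ^ (n / 2) = -1 := by
  obtain ⟨m, rfl⟩ := h4
  have h := (qhalf hn hq).resolve_right (by omega)
  have e1 : 4 * m / 2 = 2 * m := by omega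
  have e2 : (4 * m) ^ 2 / 2 = 4 * m * (2 * m) := by
    have : (4 * m) ^ 2 = 4 * m * (2 * m) * 2 := by ring
    omega
  rw [e2] at h
  rw [e1, mul_pow, ← pow_mul q (4 * m), h, inv_pow, ← pow_mul q 2]
  have : 2 * (2 * m) = 4 * m := by ring
  rw [this, mul_comm (-1 : k), ← mul_assoc, mul_inv_cancel₀ (pow_ne_zero _ (hq0 hn hq)), one_mul]

theorem rzE : Zq * Eg = -(Eg * (Zq)) := by
  have h := mul_qcomm (rKE (k := k) (q := q) hn) (pow_qcomm (rHE (k := k) (q := q) hn) (n / 2))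
  exact neg_aux (zcoef hn h4 hq) h

theorem rzF : Zq * Fq = -(Fq * (Zq)) := by
  have h := mul_qcomm (rKF (k := k) (q := q) hn) (pow_qcomm (rHF (k := k) (q := q) hn) (n / 2))
  have e : (q ^ n)⁻¹ * ((q ^ n)⁻¹ * q ^ 2) ^ (n / 2) = -1 := by
    have := congrArg (fun x => x⁻¹) (zcoef hn h4 hq)
    rw [mul_inv, ← inv_pow (q ^ n * (q ^ 2)⁻¹), mul_inv, inv_inv, inv_neg, inv_one] at this
    exact this
  exact neg_aux e h

omit hq

omit h4 in
theorem KKinv : Kq * Kinv k n q = 1 := by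
  rw [Kinv, ← pow_succ', Nat.sub_add_cancel hn, rK]

omit hn h4 in
theorem cKKi : Commute Kq (Kinv k n q) := Commute.pow_right (Commute.refl _) _

omit hn h4 in
theorem cHKi : Commute Hq (Kinv k n q) := Commute.pow_right rcomm.symm _

omit hn h4 in
theorem cKL : Commute Kq (Lq) := cKKi.mul_right rcomm

omit hn h4 in
theorem cHL : Commute Hq (Lq) := cHKi.mul_right (Commute.refl _)

omit hn h4 in
theorem cZL : Commute (Zq) (Lq) := cKL.mul_left (cHL.pow_left _)

omit h4 in
theorem H_eq : Hq = Kq * (Lq) := by rw [← mul_assoc, KKinv hn, one_mul]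

omit h4 in
theorem Kinv_n : (Kinv k n q) ^ n = 1 := by
  rw [Kinv, ← pow_mul, mul_comm, pow_mul, rK, one_pow]

omit h4 in
theorem L_n : (Lq) ^ n = Kinv k n q ^ 2 := by
  rw [(cHKi (k := k) (n := n) (q := q)).symm.mul_pow, Kinv_n hn, one_mul, rKh, Kinv]

theorem L_ord : (Lq) ^ (n ^ 2 / 2) = 1 := by
  obtain ⟨m, rfl⟩ := h4
  have e : (4 * m) ^ 2 / 2 = 4 * m * (2 * m) := by
    have : (4 * m) ^ 2 = 4 * m * (2 * m) * 2 := by ring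
    omega
  rw [e, pow_mul, L_n hn, ← pow_mul, ← mul_assoc]
  exact Kinv_n hn

theorem Z_sq : (Zq) * (Zq) = 1 := by
  obtain ⟨m, rfl⟩ := h4
  have h := (rcomm (k := k) (n := 4 * m) (q := q)).pow_right (4 * m / 2)
  rw [← pow_two, h.mul_pow, ← pow_mul]
  have e : 4 * m / 2 * 2 = 4 * m := by omega
  rw [e, rKh, ← Kinv]
  have := KKinv (k := k) (q := q) hn
  rw [← (cKKi (k := k) (n := 4 * m) (q := q)).mul_pow (n := 2), this, one_pow]

theorem K_eq : Kq = (Zq) * (Lq) ^ (n ^ 2 / 4 - n / 2) := by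
  obtain ⟨m, rfl⟩ := h4
  have hm : 1 ≤ m := by omega
  have e0 : 4 * m / 2 = 2 * m := by omega
  have e1 : (4 * m) ^ 2 / 4 = 4 * m * m := by
    have : (4 * m) ^ 2 = 4 * m * m * 4 := by ring
    omega
  have e2 : 2 * m + (4 * m * m - 2 * m) = 4 * m * m := by
    have : 2 * m ≤ 4 * m * m := by nlinarith
    omega
  have h1 := (cKL (k := k) (n := 4 * m) (q := q)).mul_pow (n := 2 * m)
  rw [e0, e1]
  conv_rhs => rw [← congrArg (fun x => x ^ (2 * m)) (H_eq (k := k) (q := q) hn).symm]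
  rw [h1, mul_assoc, mul_assoc, ← pow_add, e2, pow_mul (Kinv k (4 * m) q * Kh k (4 * m) q), L_n hn, ← pow_mul,
    ← (cKKi (k := k) (n := 4 * m) (q := q)).mul_pow (n := 2 * m), KKinv hn, one_pow, mul_one]

omit hn h4 in
theorem gen_all (T : Submodule k (U k n q)) (hK : ∀ x ∈ T, Kq * x ∈ T) (hH : ∀ x ∈ T, Hq * x ∈ T)
    (hE : ∀ x ∈ T, Eg * x ∈ T) (hF : ∀ x ∈ T, Fq * x ∈ T) (u x : U k n q) (hx : x ∈ T) :
    u * x ∈ T := by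
  obtain ⟨y, rfl⟩ := RingQuot.mkAlgHom_surjective k (Rel k n q) u
  induction y using FreeAlgebra.induction generalizing x with
  | grade0 r =>
    rw [AlgHom.commutes, ← Algebra.smul_def]; exact T.smul_mem _ hx
  | grade1 s =>
    fin_cases s
    · exact hK x hx
    · exact hH x hx
    · exact hE x hx
    · exact hF x hx
  | mul a b ha hb => rw [map_mul, mul_assoc]; exact ha _ (hb _ hx)
  | add a b ha hb => rw [map_add, add_mul]; exact T.add_mem (ha _ hx) (hb _ hx)

omit h4 in
theorem pow_closed (T : Submodule k (U k n q)) (y : U k n q) (h : ∀ x ∈ T, y * x ∈ T) (s : ℕ) :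
    ∀ x ∈ T, y ^ s * x ∈ T := by
  induction s with
  | zero => simp
  | succ s ih => intro x hx; rw [pow_succ, mul_assoc]; exact ih _ (h _ hx)

include hq in
theorem datU : Dat (n ^ 2) q Eg Fq (Lq) (Zq) where
  hq := hq
  h4 := h4.trans (Dvd.intro_left n (by ring))
  hN := by positivity
  hLE := rLE hn hq
  hEF := rEF
  hzE := rzE hn h4 hq
  hEN := rEN
  hFN := rFN
  gen := by
    intro T hL hz hE hF
    have hK : ∀ x ∈ T, Kq * x ∈ T := by
      intro x hx
      rw [K_eq (k := k) (q := q) hn h4, mul_assoc]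
      exact hz _ (pow_closed hn T _ hL _ _ hx)
    refine gen_all T hK ?_ hE hF
    intro x hx
    rw [H_eq (k := k) (q := q) hn, mul_assoc]
    exact hK _ (hL _ hx)

end rels
end QFL

namespace QFL

section idemAbs
variable {k : Type} [Field k] {R : Type} [Ring R] [Algebra k R]

theorem geom_eig {y : R} {M : ℕ} (hy : y ^ M = 1) {w : k} (hw : w ^ M = 1) (hw0 : w ≠ 0) (c : k) :
    y * (c • ∑ t ∈ Finset.range M, w ^ t • y ^ t) =
      w⁻¹ • (c • ∑ t ∈ Finset.range M, w ^ t • y ^ t) := by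
  have h1 : ∑ t ∈ Finset.range M, w ^ t • y ^ t = ∑ t ∈ Finset.range M, (w • y) ^ t := by
    refine Finset.sum_congr rfl fun t _ => ?_
    rw [smul_pow]
  have h2 : (w • y - 1) * ∑ t ∈ Finset.range M, (w • y) ^ t = 0 := by
    rw [mul_geom_sum, smul_pow, hy, hw, one_smul, sub_self]
  rw [sub_mul, one_mul, sub_eq_zero, smul_mul_assoc] at h2
  rw [h1, mul_smul_comm, smul_comm (w⁻¹) c]
  congr 1
  conv_rhs => rw [← h2]
  rw [smul_smul, inv_mul_cancel₀ hw0, one_smul]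

theorem geom_total {y : R} {M : ℕ} (hM : 0 < M) {x : k} (hx : IsPrimitiveRoot x M) (c : k)
    (hc : c * M = 1) :
    ∑ i ∈ Finset.range M, c • ∑ t ∈ Finset.range M, (x ^ (i + 1)) ^ t • y ^ t = 1 := by
  rw [← Finset.smul_sum, Finset.sum_comm]
  have h : ∀ t ∈ Finset.range M, t ≠ 0 →
      ∑ i ∈ Finset.range M, (x ^ (i + 1)) ^ t • y ^ t = 0 := by
    intro t ht h0
    rw [Finset.mem_range] at ht
    rw [← Finset.sum_smul]
    have h1 : ∑ i ∈ Finset.range M, (x ^ (i + 1)) ^ t = x ^ t * ∑ i ∈ Finset.range M, (x ^ t) ^ i := by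
      rw [Finset.mul_sum]
      refine Finset.sum_congr rfl fun i _ => ?_
      rw [← pow_mul, ← pow_mul, ← pow_add]; congr 1; ring
    have h2 : (x ^ t - 1) * ∑ i ∈ Finset.range M, (x ^ t) ^ i = 0 := by
      rw [mul_geom_sum, ← pow_mul, mul_comm, pow_mul, hx.pow_eq_one, one_pow, sub_self]
    have h3 := (mul_eq_zero.1 h2).resolve_left
      (sub_ne_zero.2 (hx.pow_ne_one_of_pos_of_lt h0 ht))
    rw [h1, h3, mul_zero, zero_smul]
  rw [Finset.sum_eq_single 0 h (fun h => absurd (Finset.mem_range.2 hM) h)]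
  simp only [pow_zero, one_smul, Finset.sum_const, Finset.card_range]
  rw [← Nat.cast_smul_eq_nsmul k, smul_smul, hc, one_smul]

theorem half_eig {z : R} (hz : z * z = 1) (j : ℕ) (c : k) :
    z * (if j = 0 then c • (1 + z) else c • (1 - z)) =
      (if j = 0 then (1 : k) else -1) • (if j = 0 then c • (1 + z) else c • (1 - z)) := by
  split_ifs
  · rw [mul_smul_comm, mul_add, hz, mul_one, one_smul, add_comm]
  · rw [mul_smul_comm, mul_sub, hz, mul_one, neg_smul, one_smul, ← smul_neg, neg_sub]

theorem half_sum [CharZero k] (z : R) : (2 : k)⁻¹ • (1 + z) + (2 : k)⁻¹ • (1 - z) = 1 := by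
  rw [← smul_add, add_add_sub_cancel, ← two_smul k (1 : R), smul_smul, inv_mul_cancel₀ two_ne_zero,
    one_smul]

theorem geom_ev {V : Type} [AddCommGroup V] [Module k V] {y : Module.End k V} {v : V} {M : ℕ} {w : k}
    (hw0 : w ≠ 0) (h : y v = w⁻¹ • v) {c : k} (hc : c * M = 1) :
    (c • ∑ t ∈ Finset.range M, w ^ t • y ^ t) v = v := by
  have hp : ∀ t, (y ^ t) v = (w⁻¹) ^ t • v := by
    intro t
    induction t with
    | zero => simp
    | succ t ih => rw [pow_succ, Module.End.mul_apply, h, map_smul, ih, smul_smul, pow_succ']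
  rw [LinearMap.smul_apply, LinearMap.sum_apply]
  have : ∀ t ∈ Finset.range M, (w ^ t • y ^ t) v = v := by
    intro t _
    rw [LinearMap.smul_apply, hp, smul_smul, ← mul_pow, mul_inv_cancel₀ hw0, one_pow, one_smul]
  rw [Finset.sum_congr rfl this, Finset.sum_const, Finset.card_range, ← Nat.cast_smul_eq_nsmul k,
    smul_smul, hc, one_smul]

end idemAbs

section idem
variable {k : Type} [Field k] [CharZero k] {n : ℕ} {q : k}

local notation "Kq" => K k n q
local notation "Hq" => Kh k n q
local notation "Eg" => E k n q
local notation "Fq" => F k n q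
local notation "Lq" => Kinv k n q * Kh k n q
local notation "Zq" => K k n q * Kh k n q ^ (n / 2)

/-- the sign attached to `j` -/
def sgn (k : Type) [Field k] (j : ℕ) : k := if j = 0 then 1 else -1

omit [CharZero k] in
theorem phi_eq (i : ℕ) : phi k n q i = ((n ^ 2 : k)⁻¹ * 2) • ∑ t ∈ Finset.range (n ^ 2 / 2),
    (q⁻¹ ^ (2 * i)) ^ t • (Lq) ^ t := by
  rw [phi]
  simp only [pow_mul]

variable (hn : 0 < n) (h4 : 4 ∣ n) (hq : IsPrimitiveRoot q (n ^ 2))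
include hn h4

theorem ccoef : ((n ^ 2 : k)⁻¹ * 2) * ((n ^ 2 / 2 : ℕ) : k) = 1 := by
  have h2 : 2 ∣ n ^ 2 := (Dvd.dvd.trans (by norm_num) h4).trans (Dvd.intro_left n (by ring))
  rw [Nat.cast_div h2 (by norm_num)]
  have : (n : k) ≠ 0 := by exact_mod_cast hn.ne'
  push_cast
  field_simp

omit [CharZero k] in
include hq in
theorem wM (i : ℕ) : (q⁻¹ ^ (2 * i)) ^ (n ^ 2 / 2) = 1 := by
  have h2 : 2 ∣ n ^ 2 := (Dvd.dvd.trans (by norm_num) h4).trans (Dvd.intro_left n (by ring))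
  have e : 2 * i * (n ^ 2 / 2) = n ^ 2 * i := by
    obtain ⟨m, hm⟩ := h2
    rw [hm, Nat.mul_div_cancel_left _ (by norm_num)]; ring
  rw [← pow_mul, e, pow_mul, hq.inv.pow_eq_one, one_pow]

omit [CharZero k] in
include hq in
theorem L_phi (i : ℕ) : (Lq) * phi k n q i = q ^ (2 * i) • phi k n q i := by
  have h := geom_eig (k := k) (R := U k n q) (L_ord (k := k) (q := q) hn h4) (wM hn h4 hq i)
    (pow_ne_zero _ (inv_ne_zero (hq0 hn hq))) ((n ^ 2 : k)⁻¹ * 2)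
  have e : (q⁻¹ ^ (2 * i))⁻¹ = q ^ (2 * i) := by rw [inv_pow, inv_inv]
  rw [e] at h
  rw [phi_eq]
  exact h

omit [CharZero k] in
include hq in
theorem L_e (i j : ℕ) : (Lq) * eIdem k n q i j = q ^ (2 * i) • eIdem k n q i j := by
  rw [eIdem, ← mul_assoc, L_phi hn h4 hq, smul_mul_assoc]

omit [CharZero k] hn h4 in
theorem phi_comm (i : ℕ) : Commute (Zq) (phi k n q i) := by
  rw [phi]
  exact (Commute.sum_right _ _ _ fun t _ => (cZL.pow_right t).smul_right _).smul_right _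

omit [CharZero k] in
theorem z_e (i j : ℕ) : (Zq) * eIdem k n q i j = sgn k j • eIdem k n q i j := by
  have h := half_eig (k := k) (R := U k n q) (Z_sq (k := k) (q := q) hn h4) j (2 : k)⁻¹
  have h' : (Zq) * oneJ k n q j = sgn k j • oneJ k n q j := h
  rw [eIdem, ← mul_assoc, (phi_comm i).eq, mul_assoc, h', mul_smul_comm]

include hq in
theorem e_total : ∑ i ∈ Finset.range (n ^ 2 / 2), (eIdem k n q (i + 1) 0 + eIdem k n q (i + 1) 1) = 1 := by
  have h1 : ∀ i ∈ Finset.range (n ^ 2 / 2), eIdem k n q (i + 1) 0 + eIdem k n q (i + 1) 1 =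
      phi k n q (i + 1) := by
    intro i _
    have h : oneJ k n q 0 + oneJ k n q 1 = 1 := half_sum (k := k) (R := U k n q) (Zq)
    rw [eIdem, eIdem, ← mul_add, h, mul_one]
  rw [Finset.sum_congr rfl h1]
  have h2 : 2 ∣ n ^ 2 := (Dvd.dvd.trans (by norm_num) h4).trans (Dvd.intro_left n (by ring))
  have hp : 0 < n ^ 2 := by positivity
  have hx : IsPrimitiveRoot (q⁻¹ ^ 2) (n ^ 2 / 2) :=
    hq.inv.pow hp (by rw [mul_comm]; exact (Nat.div_mul_cancel h2).symm)
  have h := geom_total (k := k) (R := U k n q) (y := Lq) (by omega) hx _ (ccoef (k := k) hn h4)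
  rw [← h]
  refine Finset.sum_congr rfl fun i _ => ?_
  rw [phi_eq]
  simp only [pow_mul]

omit [CharZero k] in
theorem κ_facts {l : k} (hl : l ^ (n ^ 2 / 2) = 1) (j : ℕ) : ∃ κ : k, κ ^ n = 1 ∧
    l ^ n = (κ ^ (n - 1)) ^ 2 ∧ κ * (κ * l) ^ (n / 2) = sgn k j := by
  obtain ⟨m, rfl⟩ := h4
  have hm : 1 ≤ m := by omega
  have e0 : 4 * m / 2 = 2 * m := by omega
  have e1 : (4 * m) ^ 2 / 2 = 8 * m * m := by
    have : (4 * m) ^ 2 = 8 * m * m * 2 := by ring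
    omega
  rw [e1] at hl
  have hs : sgn k j * sgn k j = 1 := by rw [sgn]; split_ifs <;> simp
  have hs2 : ∀ t, sgn k j ^ (2 * t) = 1 := by
    intro t; rw [pow_mul, pow_two, hs, one_pow]
  obtain ⟨r, hr⟩ : ∃ r, 4 * m * m = r + 2 * m := ⟨4 * m * m - 2 * m, by
    have : 2 * m ≤ 4 * m * m := by nlinarith
    omega⟩
  have hκn : (sgn k j * l ^ r) ^ (4 * m) = 1 := by
    have e : r * (4 * m) = (8 * m * m) * (2 * m - 1) := by
      zify [show 1 ≤ 2 * m by omega]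
      have : (r : ℤ) = 4 * m * m - 2 * m := by
        have : ((4 * m * m : ℕ) : ℤ) = ((r + 2 * m : ℕ) : ℤ) := by rw [hr]
        push_cast at this; linarith
      rw [this]; ring
    have e' : 4 * m = 2 * (2 * m) := by ring
    rw [mul_pow, ← pow_mul, e, pow_mul l (8 * m * m), hl, one_pow, e', hs2, one_mul]
  refine ⟨sgn k j * l ^ r, hκn, ?_, ?_⟩
  · set κ := sgn k j * l ^ r with hκ
    have hκ0 : κ ≠ 0 := by
      intro h; rw [h, zero_pow (by omega)] at hκn; exact zero_ne_one hκn
    apply mul_right_cancel₀ (pow_ne_zero 2 hκ0)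
    rw [← mul_pow (κ ^ (4 * m - 1)), ← pow_succ, Nat.sub_add_cancel hn, hκn, one_pow, hκ, mul_pow,
      pow_two (sgn k j), hs, one_mul, ← pow_mul, ← pow_add, ← hl]
    congr 1
    linarith
  · rw [e0, mul_assoc (sgn k j) (l ^ r) l, ← pow_succ, mul_pow, hs2, one_mul, ← pow_mul, mul_assoc,
      ← pow_add]
    have e : r + (r + 1) * (2 * m) = (8 * m * m) * m := by
      have h1 : r + (r + 1) * (2 * m) = (r + 2 * m) + r * (2 * m) := by ring
      have h2 : (r + 2 * m) * (2 * m) = 4 * m * m * (2 * m) := by rw [hr]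
      have h3 : 8 * m * m * m = 4 * m * m * (2 * m) := by ring
      have h4 : (r + 2 * m) * (2 * m) = r * (2 * m) + 4 * m * m := by ring
      omega
    rw [e, pow_mul, hl, one_pow, mul_one]

include hq in
/-- for each weight there is a representation in which `e` fixes `v₀₀` -/
theorem rep_e (i j : ℕ) : ∃ (l : k) (ρ : U k n q →ₐ[k] Module.End k (Vm k (n ^ 2))),
    ρ Eg = opE k (n ^ 2) q l ∧ ρ Fq = opF k (n ^ 2) ∧
    ρ (eIdem k n q i j) (bv k (n ^ 2) 0 0) = bv k (n ^ 2) 0 0 := by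
  have hn4 : 4 ≤ n := Nat.le_of_dvd hn h4
  have hl : (q ^ (2 * i)) ^ (n ^ 2 / 2) = 1 := by
    have := wM hn h4 hq i
    rw [inv_pow, inv_pow, inv_eq_one] at this
    exact this
  obtain ⟨κ, h1, h2, h3⟩ := κ_facts hn h4 hl j
  obtain ⟨ρ, rK', rH', rE', rF'⟩ := exists_rep (by omega) hq κ _ h1 h2
  refine ⟨_, ρ, rE', rF', ?_⟩
  have hL : ρ (Lq) (bv k (n ^ 2) 0 0) = (q⁻¹ ^ (2 * i))⁻¹ • bv k (n ^ 2) 0 0 := by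
    have e : (q⁻¹ ^ (2 * i))⁻¹ = q ^ (2 * i) := by rw [inv_pow, inv_inv]
    rw [map_mul, Kinv, map_pow, rK', rH', opD_pow, opD_mul, opD_bv, ← mul_assoc, ← pow_succ,
      Nat.sub_add_cancel hn, h1, e]
    simp
  have hZ : ρ (Zq) (bv k (n ^ 2) 0 0) = sgn k j • bv k (n ^ 2) 0 0 := by
    rw [map_mul, map_pow, rK', rH', opD_pow, opD_mul, opD_bv, h3]
    simp
  have hone : ρ (oneJ k n q j) (bv k (n ^ 2) 0 0) = bv k (n ^ 2) 0 0 := by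
    have hh : ∀ v : Vm k (n ^ 2), (2 : k)⁻¹ • (v + v) = v := by
      intro v
      rw [← two_smul k v, smul_smul, inv_mul_cancel₀ two_ne_zero, one_smul]
    rw [oneJ]
    rw [sgn] at hZ
    split_ifs at hZ ⊢
    · rw [map_smul, map_add, map_one, LinearMap.smul_apply, LinearMap.add_apply, hZ, one_smul,
        Module.End.one_apply, hh]
    · rw [map_smul, map_sub, map_one, LinearMap.smul_apply, LinearMap.sub_apply, hZ, neg_smul,
        one_smul, sub_neg_eq_add, Module.End.one_apply, hh]
  rw [eIdem, map_mul, Module.End.mul_apply, hone, phi_eq, map_smul, map_sum]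
  simp only [map_smul, map_pow]
  exact geom_ev (pow_ne_zero _ (inv_ne_zero (hq0 hn hq))) hL (ccoef hn h4)

end idem
end QFL

namespace QFL

section pbAbs
variable {k : Type} [Field k] {R : Type} [Ring R] [Algebra k R]

/-- the relations in the form used for the PBW argument -/
structure PB (n N : ℕ) (K H E F : R) (c c' d d' p t : k) : Prop where
  hn : 0 < n
  hN : 2 ≤ N
  comm : H * K = K * H
  Kn : K ^ n = 1
  HN : H ^ N = 1
  EN : E ^ N = 0
  FN : F ^ N = 0
  EK : E * K = c • (K * E)
  EH : E * H = c' • (H * E)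
  KF : K * F = d • (F * K)
  HF : H * F = d' • (F * H)
  LF : (K ^ (n - 1) * H) * F = t • (F * (K ^ (n - 1) * H))
  EF : E * F = p • (F * E) - p • (1 - K ^ (n - 1) * H)
  gen : ∀ T : Submodule k R, (∀ x ∈ T, K * x ∈ T) → (∀ x ∈ T, H * x ∈ T) →
    (∀ x ∈ T, E * x ∈ T) → (∀ x ∈ T, F * x ∈ T) → ∀ u x, x ∈ T → u * x ∈ T

/-- span of monomials with restricted exponent of `F` -/
def pbA (k : Type) [Field k] {R : Type} [Ring R] [Algebra k R] (A : ℕ) (K H E F : R) :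
    Submodule k R :=
  Submodule.span k {x | ∃ a c d b : ℕ, a < A ∧ x = F ^ a * K ^ c * H ^ d * E ^ b}

/-- span of all monomials -/
def pbT (k : Type) [Field k] {R : Type} [Ring R] [Algebra k R] (K H E F : R) :
    Submodule k R :=
  Submodule.span k {x | ∃ a c d b : ℕ, x = F ^ a * K ^ c * H ^ d * E ^ b}

theorem closed_of {S : Set R} {T : Submodule k R} (f : R →ₗ[k] R)
    (h : ∀ x ∈ S, f x ∈ T) : ∀ x ∈ Submodule.span k S, f x ∈ T := by
  intro x hx
  have : Submodule.span k S ≤ T.comap f := Submodule.span_le.2 h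
  exact this hx

theorem closed_mul {S : Set R} {T : Submodule k R} (y : R)
    (h : ∀ x ∈ S, y * x ∈ T) : ∀ x ∈ Submodule.span k S, y * x ∈ T :=
  closed_of (LinearMap.mulLeft k y) h

variable {n N : ℕ} {K H E F : R} {c c' d d' p t : k} (B : PB n N K H E F c c' d d' p t)
include B

theorem PB.Kmon (a r s b : ℕ) : K * (F ^ a * K ^ r * H ^ s * E ^ b) =
    d ^ a • (F ^ a * K ^ (r + 1) * H ^ s * E ^ b) := by
  simp only [← mul_assoc]
  rw [qcomm_pow B.KF a]
  simp only [smul_mul_assoc]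
  rw [mul_assoc (F ^ a) K, ← pow_succ']

theorem PB.Hmon (a r s b : ℕ) : H * (F ^ a * K ^ r * H ^ s * E ^ b) =
    d' ^ a • (F ^ a * K ^ r * H ^ (s + 1) * E ^ b) := by
  have h : Commute H (K ^ r) := Commute.pow_right B.comm r
  simp only [← mul_assoc]
  rw [qcomm_pow B.HF a]
  simp only [smul_mul_assoc]
  rw [mul_assoc (F ^ a) H, h.eq, ← mul_assoc, mul_assoc (F ^ a * K ^ r) H, ← pow_succ']

theorem PB.E0 (r s b : ℕ) : E * (F ^ 0 * K ^ r * H ^ s * E ^ b) =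
    (c ^ r * c' ^ s) • (F ^ 0 * K ^ r * H ^ s * E ^ (b + 1)) := by
  simp only [pow_zero, one_mul, ← mul_assoc]
  rw [qcomm_pow B.EK r]
  simp only [smul_mul_assoc]
  rw [mul_assoc (K ^ r) E, qcomm_pow B.EH s]
  simp only [smul_mul_assoc, mul_smul_comm, smul_smul]
  rw [pow_succ' E]
  simp only [mul_assoc]

theorem PB.top : pbT k K H E F = ⊤ := by
  have mem : ∀ a r s b, F ^ a * K ^ r * H ^ s * E ^ b ∈ pbT k K H E F := fun a r s b =>
    Submodule.subset_span ⟨a, r, s, b, rfl⟩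
  have hK : ∀ x ∈ pbT k K H E F, K * x ∈ pbT k K H E F := by
    apply closed_mul
    rintro _ ⟨a, r, s, b, rfl⟩
    rw [B.Kmon]; exact Submodule.smul_mem _ _ (mem _ _ _ _)
  have hH : ∀ x ∈ pbT k K H E F, H * x ∈ pbT k K H E F := by
    apply closed_mul
    rintro _ ⟨a, r, s, b, rfl⟩
    rw [B.Hmon]; exact Submodule.smul_mem _ _ (mem _ _ _ _)
  have hF : ∀ x ∈ pbT k K H E F, F * x ∈ pbT k K H E F := by
    apply closed_mul
    rintro _ ⟨a, r, s, b, rfl⟩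
    have := mem (a + 1) r s b
    rw [pow_succ'] at this
    simpa only [mul_assoc] using this
  have hKp : ∀ m, ∀ x ∈ pbT k K H E F, K ^ m * x ∈ pbT k K H E F := by
    intro m
    induction m with
    | zero => simp
    | succ m ih => intro x hx; rw [pow_succ, mul_assoc]; exact ih _ (hK _ hx)
  have hE : ∀ x ∈ pbT k K H E F, E * x ∈ pbT k K H E F := by
    apply closed_mul
    rintro _ ⟨a, r, s, b, rfl⟩
    induction a with
    | zero => rw [B.E0]; exact Submodule.smul_mem _ _ (mem _ _ _ _)
    | succ a ih =>
      have e : E * (F ^ (a + 1) * K ^ r * H ^ s * E ^ b) =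
          p • (F * (E * (F ^ a * K ^ r * H ^ s * E ^ b))) -
          p • ((F ^ a * K ^ r * H ^ s * E ^ b) -
            K ^ (n - 1) * (H * (F ^ a * K ^ r * H ^ s * E ^ b))) := by
        have : F ^ (a + 1) * K ^ r * H ^ s * E ^ b = F * (F ^ a * K ^ r * H ^ s * E ^ b) := by
          rw [pow_succ']; simp only [mul_assoc]
        rw [this, ← mul_assoc E F, B.EF, sub_mul, smul_mul_assoc, smul_mul_assoc, sub_mul, one_mul,
          mul_assoc F, mul_assoc (K ^ (n - 1))]
      rw [e]
      exact Submodule.sub_mem _ (Submodule.smul_mem _ _ (hF _ ih))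
        (Submodule.smul_mem _ _ (Submodule.sub_mem _ (mem _ _ _ _) (hKp _ _ (hH _ (mem _ _ _ _)))))
  rw [eq_top_iff]
  intro u _
  have h1 : (1 : R) ∈ pbT k K H E F := by simpa using mem 0 0 0 0
  simpa using B.gen _ hK hH hE hF u 1 h1

theorem PB.Fdiv (x : R) : ∃ y ∈ pbA k (N - 1) K H E F, F * y = F * x := by
  have hx : x ∈ pbT k K H E F := by rw [B.top]; trivial
  have : pbT k K H E F ≤ ((pbA k (N - 1) K H E F).map (LinearMap.mulLeft k F)).comap
      (LinearMap.mulLeft k F) := by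
    apply Submodule.span_le.2
    rintro _ ⟨a, r, s, b, rfl⟩
    by_cases ha : a < N - 1
    · exact ⟨_, Submodule.subset_span ⟨a, r, s, b, ha, rfl⟩, rfl⟩
    · refine ⟨0, Submodule.zero_mem _, ?_⟩
      have hf : F ^ (a + 1) = 0 := by
        rw [show a + 1 = N + (a + 1 - N) by omega, pow_add, B.FN, zero_mul]
      rw [map_zero]
      simp only [LinearMap.mulLeft_apply, ← mul_assoc]
      rw [← pow_succ', hf]; simp
  obtain ⟨y, hy, h⟩ := this hx
  exact ⟨y, hy, h⟩

theorem PB.EF_div (s : ℕ) (x : R) : ∃ y, E * (F ^ (s + 1) * x) = F ^ s * y := by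
  induction s generalizing x with
  | zero => exact ⟨E * (F ^ (0 + 1) * x), by simp⟩
  | succ s ih =>
    obtain ⟨y, hy⟩ := ih x
    refine ⟨p • y - p • (x - t ^ (s + 1) • ((K ^ (n - 1) * H) * x)), ?_⟩
    have e : F ^ (s + 1 + 1) * x = F * (F ^ (s + 1) * x) := by rw [pow_succ', mul_assoc]
    rw [e, ← mul_assoc E F, B.EF, sub_mul, smul_mul_assoc, smul_mul_assoc, sub_mul, one_mul,
      mul_assoc F, hy, ← mul_assoc (K ^ (n - 1) * H), qcomm_pow B.LF, mul_sub, mul_smul_comm,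
      mul_smul_comm, mul_sub, mul_smul_comm, smul_mul_assoc]
    simp only [mul_assoc, pow_succ' F]

theorem PB.EpF_div (m s : ℕ) (x : R) : ∃ y, E ^ m * (F ^ (s + m) * x) = F ^ s * y := by
  induction m generalizing s with
  | zero => exact ⟨x, by simp⟩
  | succ m ih =>
    obtain ⟨y, hy⟩ := ih (s + 1)
    obtain ⟨w, hw⟩ := B.EF_div s y
    refine ⟨w, ?_⟩
    rw [pow_succ', mul_assoc, show s + (m + 1) = s + 1 + m by omega, hy, hw]

/-- existence part of `γ` -/
theorem PB.exists_gam {m : ℕ} (hm : m + 1 ≤ N - 1) (x : R) :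
    ∃ y ∈ pbA k (N - 1) K H E F, F * y = E ^ m * (F ^ (N - 1) * x) := by
  obtain ⟨y, hy⟩ := B.EpF_div m (N - 1 - m) x
  obtain ⟨w, hw, h⟩ := B.Fdiv (F ^ (N - 1 - m - 1) * y)
  refine ⟨w, hw, ?_⟩
  rw [h, ← mul_assoc, ← pow_succ', show N - 1 - m - 1 + 1 = N - 1 - m by omega, ← hy,
    show N - 1 - m + m = N - 1 by omega]

theorem PB.closedK : ∀ x ∈ pbA k (N - 1) K H E F, K * x ∈ pbA k (N - 1) K H E F := by
  apply closed_mul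
  rintro _ ⟨a, r, s, b, ha, rfl⟩
  rw [B.Kmon]; exact Submodule.smul_mem _ _ (Submodule.subset_span ⟨_, _, _, _, ha, rfl⟩)

theorem PB.closedH : ∀ x ∈ pbA k (N - 1) K H E F, H * x ∈ pbA k (N - 1) K H E F := by
  apply closed_mul
  rintro _ ⟨a, r, s, b, ha, rfl⟩
  rw [B.Hmon]; exact Submodule.smul_mem _ _ (Submodule.subset_span ⟨_, _, _, _, ha, rfl⟩)

theorem PB.restrict : Submodule.span k {x | ∃ a b c d : ℕ, a ≤ N - 2 ∧ b ≤ N - 1 ∧ c ≤ n - 1 ∧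
    d ≤ N - 1 ∧ x = F ^ a * K ^ c * H ^ d * E ^ b} = pbA k (N - 1) K H E F := by
  have hN := B.hN
  have hn := B.hn
  apply le_antisymm
  · apply Submodule.span_le.2
    rintro _ ⟨a, b, r, s, ha, _, _, _, rfl⟩
    exact Submodule.subset_span ⟨a, r, s, b, by omega, rfl⟩
  · apply Submodule.span_le.2
    rintro _ ⟨a, r, s, b, ha, rfl⟩
    by_cases hb : b < N
    · have h1 := Nat.mod_lt r hn
      have h2 := Nat.mod_lt s (show 0 < N by omega)
      refine Submodule.subset_span ⟨a, b, r % n, s % N, by omega, by omega, by omega, by omega, ?_⟩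
      rw [← pow_eq_pow_mod r B.Kn, ← pow_eq_pow_mod s B.HN]
    · rw [show b = N + (b - N) by omega, pow_add, B.EN, zero_mul, mul_zero]
      exact Submodule.zero_mem _

/-- each monomial times a weight idempotent -/
theorem PB.mon_e (hc : c ≠ 0) (hc' : c' ≠ 0) {e : R} {κ η : k} (hK : K * e = κ • e)
    (hH : H * e = η • e) (a r s b : ℕ) :
    ∃ w : k, F ^ a * K ^ r * H ^ s * E ^ b * e = w • (F ^ a * E ^ b * e) := by
  have hKE : K * E = c⁻¹ • (E * K) := by rw [B.EK, smul_smul, inv_mul_cancel₀ hc, one_smul]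
  have hHE : H * E = c'⁻¹ • (E * H) := by rw [B.EH, smul_smul, inv_mul_cancel₀ hc', one_smul]
  have gK : K * (E ^ b * e) = (c⁻¹ ^ b * κ) • (E ^ b * e) := by
    rw [← mul_assoc, qcomm_pow hKE, smul_mul_assoc, mul_assoc, hK, mul_smul_comm, smul_smul]
  have gH : H * (E ^ b * e) = (c'⁻¹ ^ b * η) • (E ^ b * e) := by
    rw [← mul_assoc, qcomm_pow hHE, smul_mul_assoc, mul_assoc, hH, mul_smul_comm, smul_smul]
  have pw : ∀ (y v : R) (w : k), y * v = w • v → ∀ m, y ^ m * v = w ^ m • v := by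
    intro y v w h m
    induction m with
    | zero => simp
    | succ m ih => rw [pow_succ, mul_assoc, h, mul_smul_comm, ih, smul_smul, pow_succ']
  refine ⟨(c'⁻¹ ^ b * η) ^ s * (c⁻¹ ^ b * κ) ^ r, ?_⟩
  rw [mul_assoc _ (E ^ b) e, mul_assoc _ (H ^ s), pw _ _ _ gH, mul_smul_comm, mul_assoc, pw _ _ _ gK,
    mul_smul_comm, smul_smul, mul_assoc]

/-- uniqueness on a weight component -/
theorem PB.inj_e (hc : c ≠ 0) (hc' : c' ≠ 0) {e : R} {κ η : k} (hK : K * e = κ • e)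
    (hH : H * e = η • e) (q l : k) (hq : IsPrimitiveRoot q N) (ρ : R →ₐ[k] Module.End k (Vm k N))
    (hE : ρ E = opE k N q l) (hF : ρ F = opF k N) (he : ρ e (bv k N 0 0) = bv k N 0 0)
    {x : R} (hx : x ∈ pbA k (N - 1) K H E F) (h0 : F * x = 0) : x * e = 0 := by
  have hN := B.hN
  let ψ : Vm k N →ₗ[k] R := Finsupp.linearCombination k
    (fun p : Fin N × Fin N => F ^ (p.1 : ℕ) * E ^ (p.2 : ℕ) * e)
  have hψ : ∀ a b, a < N → b < N → ψ (bv k N a b) = F ^ a * E ^ b * e := by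
    intro a b ha hb
    rw [bv_pos ha hb]
    simp only [ψ, Finsupp.linearCombination_single, one_smul]
  let Y : Submodule k (Vm k N) := Submodule.span k {v | ∃ a b, a < N - 1 ∧ v = bv k N a b}
  let G : Module.End k (Vm k N) := Finsupp.linearCombination k
    (fun p : Fin N × Fin N => bv k N ((p.1 : ℕ) - 1) p.2)
  have hG : ∀ y ∈ Y, G (opF k N y) = y := by
    intro y hy
    have : Y ≤ LinearMap.eqLocus (G * opF k N) 1 := by
      apply Submodule.span_le.2
      rintro _ ⟨a, b, ha, rfl⟩
      change G (opF k N (bv k N a b)) = bv k N a b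
      rw [opF_bv]
      by_cases hb : b < N
      · rw [bv_pos (a := a + 1) (by omega) hb]
        simp only [G, Finsupp.linearCombination_single, one_smul, Nat.add_sub_cancel]
      · rw [bv_zero (by omega), map_zero, bv_zero (by omega)]
    exact this hy
  have hρ : ∀ y, ρ (ψ y) (bv k N 0 0) = y := by
    have : (LinearMap.applyₗ (bv k N 0 0)) ∘ₗ ρ.toLinearMap ∘ₗ ψ = LinearMap.id := by
      apply bv_ext
      intro a b ha hb
      change ρ (ψ (bv k N a b)) (bv k N 0 0) = bv k N a b
      rw [hψ a b ha hb, map_mul, map_mul, map_pow, map_pow, Module.End.mul_apply, he,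
        Module.End.mul_apply, hE, hF, opEpow0 hq (by omega), opFpow]
      simp
    intro y
    exact congrArg (fun f => f y) this
  have hmem : ∃ y ∈ Y, ψ y = x * e := by
    have : pbA k (N - 1) K H E F ≤ (Y.map ψ).comap (LinearMap.mulRight k e) := by
      apply Submodule.span_le.2
      rintro _ ⟨a, r, s, b, ha, rfl⟩
      obtain ⟨w, hw⟩ := B.mon_e hc hc' hK hH a r s b
      change F ^ a * K ^ r * H ^ s * E ^ b * e ∈ Y.map ψ
      rw [hw]
      apply Submodule.smul_mem
      by_cases hb : b < N
      · exact ⟨bv k N a b, Submodule.subset_span ⟨a, b, ha, rfl⟩, hψ a b (by omega) hb⟩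
      · rw [show b = N + (b - N) by omega, pow_add, B.EN, zero_mul, mul_zero, zero_mul]
        exact Submodule.zero_mem _
    exact this hx
  obtain ⟨y, hy, hxy⟩ := hmem
  have h1 : opF k N y = 0 := by
    have h2 : ρ (F * ψ y) (bv k N 0 0) = 0 := by
      rw [hxy, ← mul_assoc, h0, zero_mul, map_zero]; rfl
    rw [map_mul, Module.End.mul_apply, hρ, hF] at h2
    exact h2
  have h3 : y = 0 := by rw [← hG y hy, h1, map_zero]
  rw [← hxy, h3, map_zero]

end pbAbs

end QFL

namespace QFL

section finAbs
variable {k : Type} [Field k] {R : Type} [Ring R] [Algebra k R]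

theorem EF_flip {q : k} (h0 : q ≠ 0) {E F L : R} (h : F * E = q⁻¹ • (E * F) + (1 - L)) :
    E * F = q • (F * E) - q • (1 - L) := by
  rw [h, smul_add, smul_smul, mul_inv_cancel₀ h0, one_smul, add_sub_cancel_right]

theorem flip_smul {c : k} (h0 : c ≠ 0) {x y : R} (h : x * y = c • (y * x)) :
    y * x = c⁻¹ • (x * y) := by
  rw [h, smul_smul, inv_mul_cancel₀ h0, one_smul]

theorem eig_pow {y v : R} {w : k} (h : y * v = w • v) (m : ℕ) : y ^ m * v = w ^ m • v := by
  induction m with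
  | zero => simp
  | succ m ih => rw [pow_succ, mul_assoc, h, mul_smul_comm, ih, smul_smul, pow_succ']

theorem anti_smul {x y : R} (h : x * y = -(y * x)) : y * x = (-1 : k) • (x * y) := by
  rw [h, neg_smul, one_smul, neg_neg]

theorem sub_aux {x y z : R} {T : Submodule k R} (hx : x ∈ T) (hy : y ∈ T) (h : z * x = z * y)
    (H : ∀ w ∈ T, z * w = 0 → w = 0) : x = y :=
  sub_eq_zero.1 (H _ (T.sub_mem hx hy) (by rw [mul_sub, h, sub_self]))

theorem sum_aux {x : R} {M : ℕ} {e e' : ℕ → R}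
    (h : ∑ i ∈ Finset.range M, (e i + e' i) = 1) (h1 : ∀ i, x * e i = 0) (h2 : ∀ i, x * e' i = 0) :
    x = 0 := by
  rw [← mul_one x, ← h, Finset.mul_sum]
  refine Finset.sum_eq_zero fun i _ => ?_
  rw [mul_add, h1, h2, add_zero]

theorem zα_aux {F z e : R} {ε : k} {m : ℕ} (hzF : z * F = -(F * z)) (hze : z * e = ε • e)
    (hm : Odd m) : z * (F ^ m * e) = (-ε) • (F ^ m * e) := by
  rw [← mul_assoc, z_pow (k := k) hzF, hm.neg_one_pow, smul_mul_assoc, mul_assoc, hze,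
    mul_smul_comm, smul_smul, neg_one_mul]

theorem zβ_aux {E z v : R} {ε : k} {m : ℕ} (hzE : z * E = -(E * z)) (hzv : z * v = ε • v)
    (hm : Even m) : z * (E ^ m * v) = ε • (E ^ m * v) := by
  rw [← mul_assoc, z_pow (k := k) hzE, hm.neg_one_pow, one_smul, mul_assoc, hzv, mul_smul_comm]

theorem Fz_aux {F z g b : R} {ε : k} (hzF : z * F = -(F * z)) (hg : F * g = b)
    (hb : z * b = (-ε) • b) : F * (z * g) = F * (ε • g) := by
  have h : F * z = -(z * F) := by rw [hzF, neg_neg]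
  rw [← mul_assoc, h, neg_mul, mul_assoc, hg, hb, mul_smul_comm, hg, neg_smul, neg_neg]

end finAbs

section fin
variable {k : Type} [Field k] [CharZero k] {n : ℕ} {q : k}

local notation "Kq" => K k n q
local notation "Hq" => Kh k n q
local notation "Eg" => E k n q
local notation "Fq" => F k n q
local notation "Lq" => Kinv k n q * Kh k n q
local notation "Zq" => K k n q * Kh k n q ^ (n / 2)

variable (hn : 0 < n) (h4 : 4 ∣ n) (hq : IsPrimitiveRoot q (n ^ 2))
include hn h4 hq

omit [CharZero k] in
theorem pbU' : PB n (n ^ 2) Kq Hq Eg Fq (q ^ n)⁻¹ (q ^ n * (q ^ 2)⁻¹)⁻¹ (q ^ n)⁻¹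
    ((q ^ n)⁻¹ * q ^ 2) q (q ^ 2) where
  hn := hn
  hN := by have := Nat.le_of_dvd hn h4; nlinarith
  comm := rcomm.symm.eq
  Kn := rK
  HN := rKhN hn
  EN := rEN
  FN := rFN
  EK := flip_smul (pow_ne_zero _ (hq0 hn hq)) (rKE hn)
  EH := flip_smul (mul_ne_zero (pow_ne_zero _ (hq0 hn hq)) (inv_ne_zero (pow_ne_zero _ (hq0 hn hq))))
    (rHE hn)
  KF := rKF hn
  HF := rHF hn
  LF := rLF hn hq
  EF := EF_flip (hq0 hn hq) rEF
  gen := gen_all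

omit [CharZero k] in
theorem pbw_eq : pbw k n q = pbA k (n ^ 2 - 1) Kq Hq Eg Fq := (pbU' hn h4 hq).restrict

omit [CharZero k] in
theorem K_e (i j : ℕ) : ∃ κ : k, Kq * eIdem k n q i j = κ • eIdem k n q i j := by
  refine ⟨(q ^ (2 * i)) ^ (n ^ 2 / 4 - n / 2) * sgn k j, ?_⟩
  have h1 := eig_pow (R := U k n q) (L_e hn h4 hq i j) (n ^ 2 / 4 - n / 2)
  have h2 : (Zq) * ((Lq) ^ (n ^ 2 / 4 - n / 2) * eIdem k n q i j) =
      ((q ^ (2 * i)) ^ (n ^ 2 / 4 - n / 2) * sgn k j) • eIdem k n q i j := by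
    rw [h1, mul_smul_comm, z_e hn h4, smul_smul]
  rw [← mul_assoc, ← K_eq hn h4] at h2
  exact h2

omit [CharZero k] in
theorem H_e (i j : ℕ) : ∃ η : k, Hq * eIdem k n q i j = η • eIdem k n q i j := by
  obtain ⟨κ, hκ⟩ := K_e hn h4 hq i j
  refine ⟨q ^ (2 * i) * κ, ?_⟩
  have h : Kq * ((Lq) * eIdem k n q i j) = (q ^ (2 * i) * κ) • eIdem k n q i j := by
    rw [L_e hn h4 hq, mul_smul_comm, hκ, smul_smul]
  rw [← mul_assoc, ← H_eq hn] at h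
  exact h

theorem F_inj (x : U k n q) (hx : x ∈ pbw k n q) (h0 : Fq * x = 0) : x = 0 := by
  rw [pbw_eq hn h4 hq] at hx
  have key : ∀ i j, x * eIdem k n q i j = 0 := by
    intro i j
    obtain ⟨κ, hκ⟩ := K_e hn h4 hq i j
    obtain ⟨η, hη⟩ := H_e hn h4 hq i j
    obtain ⟨l, ρ, hE, hF, he⟩ := rep_e hn h4 hq i j
    have h1 := pow_ne_zero n (hq0 hn hq)
    have h2 := pow_ne_zero 2 (hq0 hn hq)
    exact (pbU' hn h4 hq).inj_e (inv_ne_zero h1) (inv_ne_zero (mul_ne_zero h1 (inv_ne_zero h2)))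
      hκ hη q l hq ρ hE hF he hx h0
  exact sum_aux (R := U k n q) (e_total hn h4 hq) (fun i => key (i + 1) 0) (fun i => key (i + 1) 1)

theorem gam_spec {i : ℕ} (j : ℕ) (hi : 1 ≤ i) (hi' : 2 * i ≤ n ^ 2) :
    gam k n q i j ∈ pbw k n q ∧ Fq * gam k n q i j = beta k n q i j := by
  have hex : ∃! x, x ∈ pbw k n q ∧ F k n q * x = beta k n q i j := by
    obtain ⟨y, hy, h⟩ := (pbU' hn h4 hq).exists_gam (m := 2 * i - 2) (by omega) (eIdem k n q i j)
    refine ⟨y, ⟨by rw [pbw_eq hn h4 hq]; exact hy, h⟩, ?_⟩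
    rintro y' ⟨hy', h'⟩
    rw [← pbw_eq hn h4 hq] at hy
    exact sub_aux (R := U k n q) hy' hy (h'.trans h.symm) (F_inj hn h4 hq)
  rw [gam, dif_pos hex]
  exact hex.choose_spec.1

theorem vecU {i : ℕ} (j : ℕ) (hi : 1 ≤ i) (hi' : 2 * i ≤ n ^ 2) :
    Vec (n ^ 2) q Eg Fq (Lq) (Zq) i (sgn k j) (alpha k n q i j) (gam k n q i j) := by
  have hn4 : 4 ≤ n := Nat.le_of_dvd hn h4
  have hN : 16 ≤ n ^ 2 := by nlinarith
  have h0 := hq0 hn hq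
  obtain ⟨hg, hFg⟩ := gam_spec hn h4 hq j hi hi'
  have hK := (pbU' hn h4 hq).closedK
  have hH := (pbU' hn h4 hq).closedH
  rw [← pbw_eq hn h4 hq] at hK hH
  have hKi : ∀ x ∈ pbw k n q, Kinv k n q * x ∈ pbw k n q := pow_closed hn _ _ hK (n - 1)
  have hLα : (Lq) * alpha k n q i j = q ^ (2 * i - 2) • alpha k n q i j := by
    have h := qcomm_pow (R := U k n q) (rLF hn hq) (n ^ 2 - 1)
    rw [alpha, ← mul_assoc, h, smul_mul_assoc, mul_assoc, L_e hn h4 hq, mul_smul_comm, smul_smul]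
    congr 1
    rw [← pow_mul, ← pow_add, show 2 * (n ^ 2 - 1) + 2 * i = n ^ 2 * 2 + (2 * i - 2) by omega,
      pow_add, pow_mul, hq.pow_eq_one, one_pow, one_mul]
  have hZα : (Zq) * alpha k n q i j = (-sgn k j) • alpha k n q i j := by
    refine zα_aux (R := U k n q) (rzF hn h4 hq) (z_e hn h4 i j) ?_
    have : 2 ∣ n ^ 2 := (Dvd.dvd.trans (by norm_num) h4).trans (Dvd.intro_left n (by ring))
    rw [Nat.odd_iff]; omega
  have hLβ : (Lq) * beta k n q i j = q⁻¹ ^ (2 * i - 2) • beta k n q i j := by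
    have h := L_pow (R := U k n q) (rLE hn hq) (2 * i - 2)
    rw [beta, ← mul_assoc, h, smul_mul_assoc, mul_assoc, hLα, mul_smul_comm, smul_smul]
    congr 1
    rw [mul_comm 2, pow_mul, pow_two, mul_assoc, ← mul_pow, inv_mul_cancel₀ h0, one_pow, mul_one]
  have hZβ : (Zq) * beta k n q i j = (-sgn k j) • beta k n q i j :=
    zβ_aux (R := U k n q) (rzE hn h4 hq) hZα ⟨i - 1, by omega⟩
  refine ⟨hi, hi', ?_, hLα, hZα, hFg, ?_, ?_, ?_⟩
  · rw [alpha, ← mul_assoc, ← pow_succ', Nat.sub_add_cancel (by omega), rFN, zero_mul]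
  · refine sub_aux (R := U k n q) (z := Fq) (T := pbw k n q) ?_ (Submodule.smul_mem _ _ hg) ?_
      (F_inj hn h4 hq)
    · rw [mul_assoc]; exact hKi _ (hH _ hg)
    · have h := flip_smul (R := U k n q) (pow_ne_zero 2 h0) (rLF hn hq)
      rw [← mul_assoc, h, smul_mul_assoc, mul_assoc, hFg, hLβ, smul_smul, mul_smul_comm, hFg]
      congr 1
      rw [← inv_pow, ← pow_add]
      congr 1
      omega
  · refine sub_aux (R := U k n q) (z := Fq) (T := pbw k n q) ?_ (Submodule.smul_mem _ _ hg) ?_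
      (F_inj hn h4 hq)
    · rw [mul_assoc]; exact hK _ (pow_closed hn _ _ hH _ _ hg)
    · exact Fz_aux (R := U k n q) (rzF hn h4 hq) hFg hZβ
  · intro h
    obtain ⟨l, ρ, hE, hF, he⟩ := rep_e hn h4 hq i j
    have h1 : ρ (Eg ^ (n ^ 2 - 1) * alpha k n q i j) (bv k (n ^ 2) 0 0) = 0 := by
      rw [h, map_zero]; rfl
    rw [alpha, map_mul, map_mul, map_pow, map_pow, Module.End.mul_apply, Module.End.mul_apply, he,
      hE, hF, opFpow, zero_add] at h1
    have h2 := top_coef hq (by omega) l (n ^ 2 - 1) (by omega)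
    rw [h1] at h2
    exact h2 rfl

theorem S_eq {i : ℕ} (j : ℕ) (hi : 1 ≤ i) (hi' : 2 * i ≤ n ^ 2) :
    S k n q i j = Submodule.span (U k n q) {Eg ^ (2 * i - 1) * alpha k n q i j} :=
  soc_eq (R := U k n q) (datU hn h4 hq) (vecU hn h4 hq j hi hi')

theorem main_iff {i j i' j' : ℕ} (hi : 1 ≤ i) (hi2 : i ≤ n ^ 2 / 2) (hj : j ≤ 1)
    (hi' : 1 ≤ i') (hi2' : i' ≤ n ^ 2 / 2) (hj' : j' ≤ 1) :
    Nonempty ((S k n q i j) ≃ₗ[U k n q] (S k n q i' j')) ↔ (i = i' ∧ j = j') := by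
  constructor
  · rintro ⟨f⟩
    rw [S_eq hn h4 hq j hi (by omega), S_eq hn h4 hq j' hi' (by omega)] at f
    obtain ⟨h1, h2⟩ := iso_imp (R := U k n q) (datU hn h4 hq) (vecU hn h4 hq j hi (by omega))
      (vecU hn h4 hq j' hi' (by omega)) f
    refine ⟨h1, ?_⟩
    have hne : (1 : k) ≠ -1 := by
      intro h
      have : (2 : k) = 0 := by linear_combination h
      exact two_ne_zero this
    rw [sgn, sgn] at h2
    split_ifs at h2 with h3 h4 h4
    · omega
    · exact absurd h2 hne
    · exact absurd h2.symm hne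
    · omega
  · rintro ⟨rfl, rfl⟩
    exact ⟨LinearEquiv.refl _ _⟩

end fin

end QFL

open QFL in
/-- Lemma 2.7: `S_{2i,j} ≅ S_{2i',j'}` if and only if `i = i'` and `j = j'`. -/
theorem statement11 (k : Type) [Field k] [IsAlgClosed k] [CharZero k]
    (n : ℕ) (hn : 0 < n) (h4 : 4 ∣ n) (q : k) (hq : IsPrimitiveRoot q (n ^ 2)) :
    ∀ i j i' j' : ℕ, 1 ≤ i → i ≤ n ^ 2 / 2 → j ≤ 1 → 1 ≤ i' → i' ≤ n ^ 2 / 2 → j' ≤ 1 →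
      (Nonempty ((S k n q i j) ≃ₗ[U k n q] (S k n q i' j')) ↔ (i = i' ∧ j = j')) := by
  intro i j i' j' h1 h2 h3 h4' h5 h6
  exact main_iff hn h4 hq h1 h2 h3 h4' h5 h6
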